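/- arXiv:2109.08602 — 2 statements merged into one kernel-verified Lean document; each statement's English description precedes it below -/
import Mathlib

section
/- The variational principle for slow entropy fails at the intermediate scale a^{int1,5}: there exist an integer q₁ ≥ 2 and a uniquely ergodic C^∞ diffeomorphism T of the torus 𝕋² whose unique invariant Borel probability measure is the Haar–Lebesgue measure λ, such that the upper measure-theoretic slow entropy of (T,λ) with respect to the scaling family a^{int1,5}_m(t) (with base q₁) equals 0, while the upper topological slow entropy of T with respect to the same scaling family equals 1. -/
open MeasureTheory Filter Set
open scoped Topology ENNReal NNReal

noncomputable section

/-- The Bowen metric `d_n^T(x,y) = max_{0 ≤ i ≤ n-1} d(T^i x, T^i y)`. -/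
def bowenDist {X : Type*} [PseudoMetricSpace X] (T : X → X) (n : ℕ) (x y : X) : ℝ :=
  (((Finset.range n).sup fun i => nndist (T^[i] x) (T^[i] y)) : ℝ≥0)

/-- `N_{d_n^T}(ε)`: the minimal number of `(ε,n)`-Bowen balls of `T` needed to cover the
whole space. -/
def bowenCoverNum {X : Type*} [PseudoMetricSpace X] (T : X → X) (n : ℕ) (ε : ℝ) : ℕ :=
  sInf {N : ℕ | ∃ F : Finset X, F.card = N ∧ ∀ y : X, ∃ x ∈ F, bowenDist T n x y < ε}

/-- `N(ε)`: the supremum (`0` if the set is empty, by the `Real.sSup` convention) of all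
`t > 0` such that `limsup_n N_{d_n^T}(ε) / a_n(t) > 0`. -/
def topSlowEntFun {X : Type*} [PseudoMetricSpace X] (T : X → X) (a : ℕ → ℝ → ℝ) (ε : ℝ) : ℝ :=
  sSup {t : ℝ | 0 < t ∧
    0 < Filter.atTop.limsup fun n => (bowenCoverNum T n ε : ℝ≥0∞) / ENNReal.ofReal (a n t)}

/-- The upper topological slow entropy of `T` with respect to the scaling family `a`
equals `E`, i.e. `N(ε) → E` as `ε → 0⁺`. -/
def HasUpperTopSlowEntropy {X : Type*} [PseudoMetricSpace X] (T : X → X)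
    (a : ℕ → ℝ → ℝ) (E : ℝ) : Prop :=
  Filter.Tendsto (topSlowEntFun T a) (𝓝[>] (0 : ℝ)) (𝓝 E)

/-- The circle `𝕋¹ = ℝ/ℤ` with its quotient metric and Haar–Lebesgue probability
measure `volume`. -/
abbrev Torus1 : Type := AddCircle (1 : ℝ)

/-- The 2-torus `𝕋² = ℝ²/ℤ²`, with its quotient (flat) metric, its Borel σ-algebra and
its Haar–Lebesgue probability measure `volume`. -/
abbrev Torus2 : Type := AddCircle (1 : ℝ) × AddCircle (1 : ℝ)

/-- Canonical projection `ℝ² → 𝕋²`. -/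
def torusProj : ℝ × ℝ → Torus2 := fun p => ((p.1 : Torus1), (p.2 : Torus1))

/-- `F : ℝ² → ℝ²` is a lift of `T : 𝕋² → 𝕋²`. -/
def IsLiftOf (F : ℝ × ℝ → ℝ × ℝ) (T : Torus2 → Torus2) : Prop :=
  ∀ p, torusProj (F p) = T (torusProj p)

/-- `T` is a `C^k` diffeomorphism of the torus: it is a bijection and both `T` and `T⁻¹`
admit `C^k` lifts to the universal cover `ℝ²`. -/
def IsCkTorusDiffeo (k : ℕ∞) (T : Torus2 → Torus2) : Prop :=
  Function.Bijective T ∧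
  (∃ F : ℝ × ℝ → ℝ × ℝ, ContDiff ℝ k F ∧ IsLiftOf F T) ∧
  (∃ G : ℝ × ℝ → ℝ × ℝ, ContDiff ℝ k G ∧ IsLiftOf G (Function.invFun T))

/-- `T` is weakly mixing w.r.t. the measure `μ`: `T × T` is ergodic for `μ × μ`. -/
def WeaklyMixing {X : Type*} [MeasurableSpace X] (T : X → X) (μ : Measure X) : Prop :=
  Ergodic (fun p : X × X => (T p.1, T p.2)) (μ.prod μ)

/-- `T` is uniquely ergodic with the Haar–Lebesgue measure `volume` as its unique
invariant Borel probability measure. -/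
def UniquelyErgodicWithVolume (T : Torus2 → Torus2) : Prop :=
  MeasurePreserving T volume volume ∧
  ∀ μ : Measure Torus2, IsProbabilityMeasure μ → MeasurePreserving T μ μ → μ = volume

/-- `T` (preserving the Haar measure `volume` on `𝕋²`) is measure-theoretically isomorphic
to the rotation of the circle `𝕋¹ = ℝ/ℤ` by some irrational number `α`. -/
def IsoToIrrationalRotation (T : Torus2 → Torus2) : Prop :=
  ∃ α : ℝ, Irrational α ∧
    ∃ (A : Set Torus2) (B : Set Torus1) (ψ : Torus2 → Torus1) (φ : Torus1 → Torus2),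
      MeasurableSet A ∧ MeasurableSet B ∧
      volume Aᶜ = 0 ∧ volume Bᶜ = 0 ∧
      Set.MapsTo T A A ∧ Set.MapsTo (fun y : Torus1 => y + (α : Torus1)) B B ∧
      Measurable ψ ∧ Measurable φ ∧
      Set.MapsTo ψ A B ∧ Set.MapsTo φ B A ∧
      (∀ x ∈ A, φ (ψ x) = x) ∧ (∀ y ∈ B, ψ (φ y) = y) ∧
      Measure.map ψ volume = volume ∧
      (∀ x ∈ A, ψ (T x) = ψ x + (α : Torus1))

/-- A finite measurable partition of `X`. -/
structure FinMeasPartition (X : Type*) [MeasurableSpace X] where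
  card : ℕ
  piece : Fin card → Set X
  measurable : ∀ i, MeasurableSet (piece i)
  disjoint : Pairwise fun i j => Disjoint (piece i) (piece j)
  cover : (⋃ i, piece i) = Set.univ

open Classical in
/-- The normalized Hamming distance between the length-`n` `P`-codings of the `T`-orbits
of `x` and `y` (the codings differ at time `k` iff `T^k x` and `T^k y` lie in different
pieces of `P`). -/
def codeHammingDist {X : Type*} [MeasurableSpace X] (T : X → X) (P : FinMeasPartition X)
    (n : ℕ) (x y : X) : ℝ :=
  (((Finset.range n).filter fun k =>
      ¬ ∃ i, T^[k] x ∈ P.piece i ∧ T^[k] y ∈ P.piece i).card : ℝ) / n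

/-- `S^H_P(T,n,ε)`: the minimal number of `(ε,n)`-Hamming balls whose union has
`μ`-measure greater than `1 - ε`. -/
def hammingCoverNum {X : Type*} [MeasurableSpace X] (μ : Measure X) (T : X → X)
    (P : FinMeasPartition X) (n : ℕ) (ε : ℝ) : ℕ :=
  sInf {N : ℕ | ∃ F : Finset X, F.card = N ∧
    ENNReal.ofReal (1 - ε) < μ (⋃ x ∈ F, {y | codeHammingDist T P n x y < ε})}

/-- For a fixed partition `P` and `ε > 0`: the supremum (with the `Real.sSup` convention,
`0` if the set is empty) of all `t > 0` with `limsup_n S^H_P(T,n,ε)/a_n(t) > 0`. -/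
def measSlowEntFun {X : Type*} [MeasurableSpace X] (μ : Measure X) (T : X → X)
    (a : ℕ → ℝ → ℝ) (P : FinMeasPartition X) (ε : ℝ) : ℝ :=
  sSup {t : ℝ | 0 < t ∧
    0 < Filter.atTop.limsup fun n =>
      (hammingCoverNum μ T P n ε : ℝ≥0∞) / ENNReal.ofReal (a n t)}

/-- The upper measure-theoretic slow entropy of `(T,μ)` w.r.t. the scaling family `a`
equals `E`: for every finite measurable partition the limit as `ε → 0⁺` exists, and the
least upper bound over all partitions of these limits is `E`. -/
def HasUpperMeasSlowEntropy {X : Type*} [MeasurableSpace X] (μ : Measure X) (T : X → X)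
    (a : ℕ → ℝ → ℝ) (E : ℝ) : Prop :=
  (∀ P : FinMeasPartition X, ∃ e : ℝ,
      Filter.Tendsto (measSlowEntFun μ T a P) (𝓝[>] (0 : ℝ)) (𝓝 e)) ∧
  IsLUB {e : ℝ | ∃ P : FinMeasPartition X,
      Filter.Tendsto (measSlowEntFun μ T a P) (𝓝[>] (0 : ℝ)) (𝓝 e)} E

/-- `Γ_r(x) = (Γ(x^{1/r} + 1))^r`, where `Γ` is the Euler Gamma function. -/
def GammaR (r : ℕ) (x : ℝ) : ℝ := (Real.Gamma (x ^ ((r : ℝ)⁻¹) + 1)) ^ r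

/-- The inverse of `Γ_r` on `[1,∞)` (where `Γ_r` is strictly increasing with `Γ_r 1 = 1`). -/
def GammaRInv (r : ℕ) (y : ℝ) : ℝ := sSup {x : ℝ | 1 ≤ x ∧ GammaR r x ≤ y}

/-- The intermediate scaling family `a^{int1,r}_m(t) = m^(t / Γ_r⁻¹(ln m / ln q₁))`. -/
def intScale1 (r q₁ : ℕ) (m : ℕ) (t : ℝ) : ℝ :=
  (m : ℝ) ^ (t / GammaRInv r (Real.log m / Real.log q₁))

/-- The intermediate scaling family
`a^{int2,r}_m(t) = m^(t / (Γ_r⁻¹(ln m / ln q₁))^((r-2)/r))`. -/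
def intScale2 (r q₁ : ℕ) (m : ℕ) (t : ℝ) : ℝ :=
  (m : ℝ) ^ (t / GammaRInv r (Real.log m / Real.log q₁) ^ (((r : ℝ) - 2) / (r : ℝ)))

/-- The logarithmic scaling family `a^{ln}_m(t) = (ln m)^t`. -/
def logScale (m : ℕ) (t : ℝ) : ℝ := Real.log m ^ t

/-- The polynomial scaling family `a^{pol}_m(t) = m^t`. -/
def polScale (m : ℕ) (t : ℝ) : ℝ := (m : ℝ) ^ t

end

open MeasureTheory Filter Set
open scoped Topology ENNReal NNReal
noncomputable section
namespace SE

def qq (k : ℕ) : ℕ := 2 ^ (k.factorial ^ 5)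
def pp (j : ℕ) : ℕ := qq (2 * j + 2)
def AA (j : ℕ) : ℕ := qq (2 * j + 3)

lemma qq_succ (k : ℕ) : qq (k + 1) = qq k ^ ((k + 1) ^ 5) := by
  unfold qq
  rw [← pow_mul, Nat.factorial_succ, mul_pow, mul_comm]

lemma AA_eq (j : ℕ) : AA j = pp j ^ ((2 * j + 3) ^ 5) := qq_succ (2 * j + 2)
lemma pp_succ (j : ℕ) : pp (j + 1) = AA j ^ ((2 * j + 4) ^ 5) := qq_succ (2 * j + 3)

lemma two_pow_le_pp (j : ℕ) : 2 ^ (j + 32) ≤ pp j := by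
  unfold pp qq
  apply Nat.pow_le_pow_right (by norm_num)
  have h1 : 2 * j + 2 ≤ (2 * j + 2).factorial := Nat.self_le_factorial _
  calc j + 32 ≤ (2 * j + 2) ^ 5 := by
        have : (j + 1) ≤ (j + 1) ^ 5 := Nat.le_self_pow (by norm_num) _
        have e : (2 * j + 2) ^ 5 = 32 * (j + 1) ^ 5 := by ring
        rw [e]; omega
    _ ≤ _ := Nat.pow_le_pow_left h1 5

lemma pp_pos (j : ℕ) : 0 < pp j := by unfold pp qq; positivity
lemma AA_pos (j : ℕ) : 0 < AA j := by unfold AA qq; positivity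

lemma pp_big (j : ℕ) : 2 ^ 32 ≤ pp j :=
  (Nat.pow_le_pow_right (by norm_num) (by omega)).trans (two_pow_le_pp j)

lemma AA_ge (j : ℕ) : pp j ^ 243 ≤ AA j := by
  rw [AA_eq]
  apply Nat.pow_le_pow_right (pp_pos j)
  calc 243 = 3 ^ 5 := by norm_num
    _ ≤ _ := Nat.pow_le_pow_left (by omega) 5

lemma pp_succ_ge (j : ℕ) : AA j ^ 1024 ≤ pp (j + 1) := by
  rw [pp_succ]
  apply Nat.pow_le_pow_right (AA_pos j)
  calc 1024 = 4 ^ 5 := by norm_num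
    _ ≤ _ := Nat.pow_le_pow_left (by omega) 5

lemma pp_le_AA (j : ℕ) : pp j ≤ AA j :=
  (Nat.le_self_pow (by norm_num) _).trans (AA_ge j)

lemma AA_le_pp (j : ℕ) : AA j ≤ pp (j + 1) :=
  (Nat.le_self_pow (by norm_num) _).trans (pp_succ_ge j)

lemma pp_dvd_succ (j : ℕ) : pp j ∣ pp (j + 1) := by
  have h1 : pp j ∣ AA j := by rw [AA_eq]; exact dvd_pow_self _ (by positivity)
  have h2 : AA j ∣ pp (j + 1) := by rw [pp_succ]; exact dvd_pow_self _ (by positivity)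
  exact h1.trans h2

lemma pp_dvd {l j : ℕ} (h : l ≤ j) : pp l ∣ pp j := by
  induction h with
  | refl => exact dvd_rfl
  | step _ ih => exact ih.trans (pp_dvd_succ _)

/-- real versions -/
def P (j : ℕ) : ℝ := pp j
def A (j : ℕ) : ℝ := AA j
def LL (j : ℕ) : ℝ := P j * A j

lemma P_ge (j : ℕ) : (2 : ℝ) ^ 32 ≤ P j := by unfold P; exact_mod_cast pp_big j
lemma P_ge' (j : ℕ) : (2 : ℝ) ^ j ≤ P j := by
  unfold P
  exact_mod_cast (Nat.pow_le_pow_right (by norm_num) (by omega)).trans (two_pow_le_pp j)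
lemma P_ge'' (j : ℕ) : (1000000 : ℝ) ≤ P j := le_trans (by norm_num) (P_ge j)
lemma P_pos (j : ℕ) : 0 < P j := by linarith [P_ge'' j]
lemma P_le_A (j : ℕ) : P j ≤ A j := by unfold P A; exact_mod_cast pp_le_AA j
lemma A_ge'' (j : ℕ) : (1000000 : ℝ) ≤ A j := (P_ge'' j).trans (P_le_A j)
lemma A_pos (j : ℕ) : 0 < A j := by linarith [A_ge'' j]
lemma A_le_P (j : ℕ) : A j ≤ P (j + 1) := by unfold P A; exact_mod_cast AA_le_pp j
lemma A_pow_le (j k : ℕ) (hk : k ≤ 1024) : A j ^ k ≤ P (j + 1) := by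
  have h1 : A j ^ k ≤ A j ^ 1024 :=
    pow_le_pow_right₀ (by linarith [A_ge'' j]) hk
  refine h1.trans ?_
  unfold P A; exact_mod_cast pp_succ_ge j
lemma P_pow_le (j k : ℕ) (hk : k ≤ 243) : P j ^ k ≤ A j := by
  have h1 : P j ^ k ≤ P j ^ 243 :=
    pow_le_pow_right₀ (by linarith [P_ge'' j]) hk
  refine h1.trans ?_
  unfold P A; exact_mod_cast AA_ge j
lemma LL_pos (j : ℕ) : 0 < LL j := mul_pos (P_pos j) (A_pos j)
lemma LL_le (j : ℕ) : LL j ≤ A j ^ 2 := by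
  unfold LL; rw [sq]; exact mul_le_mul_of_nonneg_right (P_le_A j) (A_pos j).le
lemma A_le_LL (j : ℕ) : A j ≤ LL j := by
  unfold LL; nlinarith [P_ge'' j, A_pos j]
lemma LL_big (j : ℕ) : 1000000 * LL j ≤ P (j + 1) := by
  have h := A_pow_le j 3 (by norm_num)
  have := LL_le j
  have h2 : 1000000 * A j ^ 2 ≤ A j ^ 3 := by
    have := A_ge'' j
    nlinarith [sq_nonneg (A j)]
  linarith
lemma LL_le_succ (j : ℕ) : 1000000 * LL j ≤ LL (j + 1) := by
  have := LL_big j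
  have h2 : P (j + 1) ≤ LL (j + 1) := (P_le_A _).trans (A_le_LL _)
  linarith

lemma sumL2 (J : ℕ) : ∑ j ∈ Finset.range (J + 1), LL j ≤ 2 * LL J := by
  induction J with
  | zero => simp; linarith [LL_pos 0]
  | succ n ih =>
    rw [Finset.sum_range_succ]
    linarith [LL_le_succ n, LL_pos n]

lemma sumL (J : ℕ) : 100000 * ∑ j ∈ Finset.range J, LL j ≤ P J := by
  cases J with
  | zero => simp; exact (P_pos 0).le
  | succ n => linarith [LL_big n, sumL2 n, LL_pos n]

lemma geom_aux (a : ℕ → ℝ) (h0 : ∀ l, 0 ≤ a l) (h : ∀ l, a (l + 1) ≤ a l / 2) :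
    Summable a ∧ ∀ J, ∑' l, a (l + J) ≤ 2 * a J := by
  have hb : ∀ J l, a (l + J) ≤ a J * (1 / 2) ^ l := by
    intro J l
    induction l with
    | zero => simp
    | succ n ih =>
      have := h (n + J)
      rw [show n + 1 + J = n + J + 1 by ring, pow_succ]
      linarith
  have hg : ∀ J, Summable (fun l : ℕ => a J * (1 / 2 : ℝ) ^ l) := fun J =>
    (summable_geometric_two).mul_left _
  have hs : ∀ J, Summable (fun l => a (l + J)) := fun J =>
    Summable.of_nonneg_of_le (fun l => h0 _) (hb J) (hg J)
  refine ⟨by simpa using hs 0, fun J => ?_⟩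
  calc ∑' l, a (l + J) ≤ ∑' l : ℕ, a J * (1 / 2 : ℝ) ^ l := (hs J).tsum_le_tsum (hb J) (hg J)
    _ = 2 * a J := by rw [tsum_mul_left, tsum_geometric_two]; ring

lemma invP_half (l : ℕ) : 1 / P (l + 1) ≤ 1 / P l / 2 := by
  rw [div_div]
  apply one_div_le_one_div_of_le
  · linarith [P_pos l]
  · have := A_pow_le l 2 (by norm_num)
    nlinarith [P_le_A l, A_ge'' l, P_pos l]

lemma summ_invP : Summable (fun l => 1 / P l) :=
  (geom_aux (fun l => 1 / P l) (fun l => by have := P_pos l; positivity) invP_half).1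

def alpha : ℝ := ∑' l, 1 / P l
def dl (j : ℕ) : ℝ := P j * ∑' l, 1 / P (l + (j + 1))

lemma dl_le (j : ℕ) : dl j ≤ 2 * P j / P (j + 1) := by
  have := (geom_aux (fun l => 1 / P l) (fun l => by have := P_pos l; positivity) invP_half).2 (j + 1)
  unfold dl
  calc _ ≤ P j * (2 * (1 / P (j + 1))) := mul_le_mul_of_nonneg_left this (P_pos j).le
    _ = _ := by ring

lemma dl_ge (j : ℕ) : P j / P (j + 1) ≤ dl j := by
  unfold dl
  rw [div_eq_mul_one_div]
  apply mul_le_mul_of_nonneg_left _ (P_pos j).le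
  have hs : Summable (fun l => 1 / P (l + (j + 1))) := (summable_nat_add_iff (j + 1)).2 summ_invP
  have := hs.le_tsum 0 (fun l _ => by have := P_pos (l + (j + 1)); positivity)
  simpa using this

lemma dl_pos (j : ℕ) : 0 < dl j := lt_of_lt_of_le (div_pos (P_pos _) (P_pos _)) (dl_ge j)

lemma P_alpha (j : ℕ) : ∃ N : ℤ, P j * alpha = N + dl j := by
  have h := summ_invP.sum_add_tsum_nat_add (j + 1)
  refine ⟨∑ l ∈ Finset.range (j + 1), ((pp j / pp l : ℕ) : ℤ), ?_⟩
  unfold alpha dl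
  rw [← h, mul_add]
  congr 1
  rw [Int.cast_sum, Finset.mul_sum]
  apply Finset.sum_congr rfl
  intro l hl
  have hd : pp l ∣ pp j := pp_dvd (by have := Finset.mem_range.1 hl; omega)
  unfold P
  rw [Int.cast_natCast, Nat.cast_div hd (by exact_mod_cast (pp_pos l).ne')]
  ring

lemma pp_alpha (j : ℕ) : pp j • ((alpha : ℝ) : Torus1) = ((dl j : ℝ) : Torus1) := by
  obtain ⟨N, hN⟩ := P_alpha j
  rw [← AddCircle.coe_nsmul, nsmul_eq_mul]
  have : (pp j : ℝ) * alpha = N + dl j := hN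
  rw [this, AddCircle.coe_add]
  have : ((N : ℝ) : Torus1) = 0 := by
    rw [AddCircle.coe_eq_zero_iff]; exact ⟨N, by simp⟩
  rw [this, zero_add]

lemma dl_small (j : ℕ) : dl j * A j * 10000 ≤ 1 := by
  have h1 := dl_le j
  have h2 := LL_big j
  have hp := P_pos (j + 1)
  have : dl j * A j ≤ 2 * LL j / P (j + 1) := by
    calc _ ≤ 2 * P j / P (j + 1) * A j := mul_le_mul_of_nonneg_right h1 (A_pos j).le
      _ = _ := by unfold LL; ring
  have h3 : 2 * LL j / P (j + 1) * 10000 ≤ 1 := by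
    rw [div_mul_eq_mul_div, div_le_one hp]; linarith [LL_pos j]
  linarith

lemma alpha_irr : Irrational alpha := by
  rintro ⟨r, hr⟩
  -- r = a / b
  have hb : (0 : ℝ) < r.den := by exact_mod_cast r.pos
  obtain ⟨j, hj⟩ : ∃ j : ℕ, (r.den : ℝ) < 2 ^ j := pow_unbounded_of_one_lt _ (by norm_num)
  obtain ⟨N, hN⟩ := P_alpha j
  have hd : (r.den : ℝ) * dl j = ((pp j : ℤ) * r.num - r.den * N : ℤ) := by
    have e : (r.den : ℝ) * alpha = r.num := by
      rw [← hr]; exact_mod_cast Rat.den_mul_eq_num r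
    push_cast
    have : dl j = P j * alpha - N := by linarith
    rw [this, ← e]; unfold P; ring
  have hpos : (0 : ℝ) < r.den * dl j := mul_pos hb (dl_pos j)
  have hlt : (r.den : ℝ) * dl j < 1 := by
    have h1 := dl_small j
    have h2 : (r.den : ℝ) < A j := hj.trans_le ((P_ge' j).trans (P_le_A j))
    nlinarith [dl_pos j]
  rw [hd] at hpos hlt
  have a1 : 0 < ((pp j : ℤ) * r.num - r.den * N : ℤ) := by exact_mod_cast hpos
  have a2 : ((pp j : ℤ) * r.num - r.den * N : ℤ) < 1 := by exact_mod_cast hlt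
  omega

/-- tail bound -/
def tau (j : ℕ) : ℝ := LL j / P (j + 1)
lemma tau_pos (j : ℕ) : 0 < tau j := div_pos (LL_pos _) (P_pos _)

lemma tau_le (j : ℕ) : tau j * LL j ^ 5 ≤ 1 := by
  unfold tau
  rw [div_mul_eq_mul_div, div_le_one (P_pos _)]
  calc LL j * LL j ^ 5 = LL j ^ 6 := by ring
    _ ≤ (A j ^ 2) ^ 6 := pow_le_pow_left₀ (LL_pos j).le (LL_le j) 6
    _ = A j ^ 12 := by ring
    _ ≤ _ := A_pow_le j 12 (by norm_num)

lemma tau_half (j : ℕ) : tau (j + 1) ≤ tau j / 2 := by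
  have h1 := tau_le (j + 1)
  have hL1 : 1 ≤ LL (j + 1) := by linarith [A_ge'' (j + 1), A_le_LL (j + 1)]
  have h3 : LL (j + 1) ≤ LL (j + 1) ^ 5 := le_self_pow₀ hL1 (by norm_num)
  have h4 : tau (j + 1) * LL (j + 1) ≤ 1 := by
    have := mul_le_mul_of_nonneg_left h3 (tau_pos (j + 1)).le
    linarith
  have h5 : tau (j + 1) ≤ 1 / LL (j + 1) := by
    rw [le_div_iff₀ (LL_pos _)]; exact h4
  have h6 : 1 / LL (j + 1) ≤ 1 / P (j + 1) :=
    one_div_le_one_div_of_le (P_pos _) ((P_le_A _).trans (A_le_LL _))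
  have h7 : 1 / P (j + 1) ≤ tau j / 2 := by
    unfold tau
    rw [div_div, mul_comm, div_le_div_iff₀ (P_pos _) (by linarith [P_pos (j + 1)])]
    have : 2 ≤ LL j := by linarith [A_ge'' j, A_le_LL j]
    nlinarith [P_pos (j + 1)]
  linarith

lemma Adl_le (j : ℕ) : A j * dl j ≤ 2 * tau j := by
  have := mul_le_mul_of_nonneg_left (dl_le j) (A_pos j).le
  calc _ ≤ _ := this
    _ = _ := by unfold tau LL; ring

lemma summ_tau : Summable tau := (geom_aux tau (fun l => (tau_pos l).le) tau_half).1
lemma tsum_tau (J : ℕ) : ∑' l, tau (l + J) ≤ 2 * tau J :=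
  (geom_aux tau (fun l => (tau_pos l).le) tau_half).2 J

lemma A_ge_two_pow (j : ℕ) : (2 : ℝ) ^ j ≤ A j := (P_ge' j).trans (P_le_A j)

end SE
end

open MeasureTheory Filter Set
open scoped Topology ENNReal NNReal
noncomputable section
namespace SE

/-! ### The inverse of `Γ_5` -/

lemma GammaR_pow (s : ℝ) (hs : 0 ≤ s) : GammaR 5 (s ^ 5) = Real.Gamma (s + 1) ^ 5 := by
  unfold GammaR
  congr 3
  rw [← Real.rpow_natCast s 5, ← Real.rpow_mul hs]
  norm_num

lemma GammaR_strictMono : StrictMonoOn (GammaR 5) (Ici 1) := by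
  intro x hx y hy hxy
  unfold GammaR
  have hx1 : (1 : ℝ) ≤ x := hx
  have hy1 : (1 : ℝ) ≤ y := hy
  have h1 : (1 : ℝ) ≤ x ^ (((5 : ℕ) : ℝ)⁻¹) := Real.one_le_rpow hx1 (by positivity)
  have h2 : x ^ (((5 : ℕ) : ℝ)⁻¹) < y ^ (((5 : ℕ) : ℝ)⁻¹) :=
    Real.rpow_lt_rpow (by linarith) hxy (by positivity)
  apply pow_lt_pow_left₀ _ (Real.Gamma_pos_of_pos (by linarith)).le (by norm_num)
  apply Real.Gamma_strictMonoOn_Ici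
  · show (2 : ℝ) ≤ _; linarith
  · show (2 : ℝ) ≤ _; linarith
  · linarith

lemma GammaR_fact (k : ℕ) : GammaR 5 ((k : ℝ) ^ 5) = (k.factorial : ℝ) ^ 5 := by
  rw [GammaR_pow _ (by positivity), Real.Gamma_nat_eq_factorial]

lemma GammaR_one : GammaR 5 1 = 1 := by
  have := GammaR_fact 1
  simpa using this

lemma GammaR_cont : ContinuousOn (GammaR 5) (Ici 1) := by
  intro x hx
  have hx1 : (1 : ℝ) ≤ x := hx
  apply ContinuousAt.continuousWithinAt
  unfold GammaR
  apply ContinuousAt.pow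
  have h1 : (1 : ℝ) ≤ x ^ (((5 : ℕ) : ℝ)⁻¹) := Real.one_le_rpow hx1 (by positivity)
  have hd : ContinuousAt Real.Gamma (x ^ (((5 : ℕ) : ℝ)⁻¹) + 1) := by
    apply (Real.differentiableAt_Gamma _).continuousAt
    intro m hm
    have : (0 : ℝ) ≤ m := by positivity
    linarith
  have hc : ContinuousAt (fun x : ℝ => x ^ (((5 : ℕ) : ℝ)⁻¹) + 1) x :=
    (Real.continuousAt_rpow_const x _ (Or.inr (by positivity))).add continuousAt_const
  exact ContinuousAt.comp (g := Real.Gamma) hd hc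

lemma Inv_of_eq {x y : ℝ} (hx : 1 ≤ x) (h : GammaR 5 x = y) : GammaRInv 5 y = x := by
  unfold GammaRInv
  apply IsGreatest.csSup_eq
  refine ⟨⟨hx, h.le⟩, ?_⟩
  rintro z ⟨hz1, hz⟩
  rw [← h] at hz
  exact (GammaR_strictMono.le_iff_le hz1 hx).1 hz

lemma exists_GammaR {y : ℝ} (hy : 1 ≤ y) : ∃ x, 1 ≤ x ∧ GammaR 5 x = y := by
  obtain ⟨k, hk⟩ := exists_nat_ge y
  have hk1 : (1 : ℝ) ≤ ((k + 1 : ℕ) : ℝ) := by push_cast; linarith [(Nat.cast_nonneg k : (0 : ℝ) ≤ k)]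
  have hk5 : (1 : ℝ) ≤ ((k + 1 : ℕ) : ℝ) ^ 5 := one_le_pow₀ hk1
  have := intermediate_value_Icc (f := GammaR 5) hk5 (GammaR_cont.mono Icc_subset_Ici_self)
  have hmem : y ∈ Icc (GammaR 5 1) (GammaR 5 (((k + 1 : ℕ) : ℝ) ^ 5)) := by
    rw [GammaR_one, GammaR_fact]
    refine ⟨hy, ?_⟩
    have h1 : ((k + 1 : ℕ) : ℝ) ≤ ((k + 1).factorial : ℝ) := by
      exact_mod_cast Nat.self_le_factorial _
    have h2 : ((k + 1).factorial : ℝ) ≤ ((k + 1).factorial : ℝ) ^ 5 :=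
      le_self_pow₀ (by linarith) (by norm_num)
    push_cast at h1
    linarith
  obtain ⟨x, hx, hxy⟩ := this hmem
  exact ⟨x, hx.1, hxy⟩

lemma Inv_spec {y : ℝ} (hy : 1 ≤ y) : 1 ≤ GammaRInv 5 y ∧ GammaR 5 (GammaRInv 5 y) = y := by
  obtain ⟨x, hx, h⟩ := exists_GammaR hy
  rw [Inv_of_eq hx h]
  exact ⟨hx, h⟩

lemma Inv_mono {y z : ℝ} (hy : 1 ≤ y) (hyz : y ≤ z) : GammaRInv 5 y ≤ GammaRInv 5 z := by
  have h1 := Inv_spec hy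
  have h2 := Inv_spec (hy.trans hyz)
  rw [← GammaR_strictMono.le_iff_le h1.1 h2.1, h1.2, h2.2]
  exact hyz

lemma Inv_fact (k : ℕ) (hk : 1 ≤ k) : GammaRInv 5 ((k.factorial : ℝ) ^ 5) = (k : ℝ) ^ 5 :=
  Inv_of_eq (one_le_pow₀ (by exact_mod_cast hk)) (GammaR_fact k)

/-- the growth exponent -/
def ff (y : ℝ) : ℝ := y / GammaRInv 5 y

lemma ff_eq {y : ℝ} (hy : 1 ≤ y) :
    ∃ s, 1 ≤ s ∧ GammaRInv 5 y = s ^ 5 ∧ ff y = Real.Gamma s ^ 5 := by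
  obtain ⟨h1, h2⟩ := Inv_spec hy
  set x := GammaRInv 5 y with hx
  refine ⟨x ^ (((5 : ℕ) : ℝ)⁻¹), Real.one_le_rpow h1 (by positivity), ?_, ?_⟩
  · rw [← Real.rpow_natCast, ← Real.rpow_mul (by linarith)]; norm_num
  · unfold ff
    rw [← hx]
    have hs : (1 : ℝ) ≤ x ^ (((5 : ℕ) : ℝ)⁻¹) := Real.one_le_rpow h1 (by positivity)
    have hxs : x = (x ^ (((5 : ℕ) : ℝ)⁻¹)) ^ 5 := by
      rw [← Real.rpow_natCast, ← Real.rpow_mul (by linarith)]; norm_num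
    rw [← h2]
    unfold GammaR
    rw [Real.Gamma_add_one (by linarith), mul_pow, ← hxs]
    field_simp

lemma ff_mono {y z : ℝ} (hy : 32 ≤ y) (hyz : y ≤ z) : ff y ≤ ff z := by
  obtain ⟨s, hs, h1, h2⟩ := ff_eq (show 1 ≤ y by linarith)
  obtain ⟨u, hu, h3, h4⟩ := ff_eq (show 1 ≤ z by linarith)
  have hle : s ^ 5 ≤ u ^ 5 := by
    rw [← h1, ← h3]; exact Inv_mono (by linarith) hyz
  have h32 : (2 : ℝ) ^ 5 ≤ s ^ 5 := by
    have := Inv_fact 2 (by norm_num)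
    rw [← h1]
    have h5 := Inv_mono (y := ((Nat.factorial 2 : ℕ) : ℝ) ^ 5) (z := y)
      (by norm_num [Nat.factorial]) (by norm_num [Nat.factorial]; linarith)
    rw [this] at h5
    exact_mod_cast h5
  have hsu : s ≤ u := (pow_le_pow_iff_left₀ (by linarith) (by linarith) (by norm_num)).1 hle
  have h2s : 2 ≤ s := (pow_le_pow_iff_left₀ (by norm_num) (by linarith) (by norm_num)).1 h32
  rw [h2, h4]
  apply pow_le_pow_left₀ (Real.Gamma_pos_of_pos (by linarith)).le
  exact Real.Gamma_strictMonoOn_Ici.monotoneOn h2s (h2s.trans hsu) hsu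

lemma ff_fact (k : ℕ) : ff (((k + 1).factorial : ℝ) ^ 5) = (k.factorial : ℝ) ^ 5 := by
  unfold ff
  rw [Inv_fact (k + 1) (by omega), Nat.factorial_succ]
  have : ((k + 1 : ℕ) : ℝ) ≠ 0 := by positivity
  push_cast at this ⊢
  field_simp

lemma ff_nonneg {y : ℝ} (hy : 1 ≤ y) : 0 ≤ ff y := by
  have := Inv_spec hy
  unfold ff; apply div_nonneg <;> linarith

/-- The scale in terms of `ff`. -/
lemma scale_eq (m : ℕ) (hm : 1 ≤ m) (t : ℝ) :
    intScale1 5 2 m t = 2 ^ (t * ff (Real.logb 2 m)) := by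
  unfold intScale1 ff
  have hm0 : (0 : ℝ) < m := by exact_mod_cast hm
  have h2 : Real.log m / Real.log (2 : ℕ) = Real.logb 2 m := by simp [Real.logb]
  rw [h2]
  nth_rewrite 1 [show (m : ℝ) = 2 ^ (Real.logb 2 m) from
    (Real.rpow_logb (by norm_num) (by norm_num) hm0).symm]
  rw [← Real.rpow_mul (by norm_num)]
  congr 1
  ring

lemma ff_tendsto : Tendsto ff atTop atTop := by
  rw [tendsto_atTop]
  intro b
  obtain ⟨k, hk⟩ := exists_nat_ge (max b 1)
  have hk1 : (1 : ℝ) ≤ k := (le_max_right _ _).trans hk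
  have hkf : (k : ℝ) ≤ (k.factorial : ℝ) := by exact_mod_cast Nat.self_le_factorial _
  filter_upwards [eventually_ge_atTop (((k + 1).factorial : ℝ) ^ 5)] with y hy
  have h2 : (2 : ℝ) ≤ ((k + 1).factorial : ℝ) := by
    have : 2 ≤ (k + 1).factorial := by
      have h : 1 ≤ k := by exact_mod_cast hk1
      calc 2 = Nat.factorial 2 := rfl
        _ ≤ _ := Nat.factorial_le (by omega)
    exact_mod_cast this
  have h32 : (32 : ℝ) ≤ ((k + 1).factorial : ℝ) ^ 5 := by
    calc (32 : ℝ) = 2 ^ 5 := by norm_num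
      _ ≤ _ := pow_le_pow_left₀ (by norm_num) h2 5
  have := ff_mono h32 hy
  rw [ff_fact] at this
  have h3 : (k.factorial : ℝ) ≤ (k.factorial : ℝ) ^ 5 :=
    le_self_pow₀ (by linarith) (by norm_num)
  linarith [le_max_left b 1]

lemma scale_tendsto (t : ℝ) (ht : 0 < t) :
    Tendsto (fun m : ℕ => intScale1 5 2 m t) atTop atTop := by
  have h1 : Tendsto (fun m : ℕ => Real.logb 2 m) atTop atTop :=
    (Real.tendsto_logb_atTop (by norm_num)).comp tendsto_natCast_atTop_atTop
  have h2 := (ff_tendsto.comp h1).const_mul_atTop ht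
  have h3 : Tendsto (fun x : ℝ => (2 : ℝ) ^ x) atTop atTop :=
    tendsto_rpow_atTop_of_base_gt_one 2 (by norm_num)
  refine (h3.comp h2).congr' ?_
  filter_upwards [eventually_ge_atTop 1] with m hm
  rw [scale_eq m hm t]; rfl

lemma logb_qq (k : ℕ) : Real.logb 2 (qq k : ℝ) = (k.factorial : ℝ) ^ 5 := by
  unfold qq
  push_cast
  rw [Real.logb_pow, Real.logb_self_eq_one (by norm_num)]
  push_cast; ring

lemma scale_qq (k : ℕ) (t : ℝ) : intScale1 5 2 (qq (k + 1)) t = (qq k : ℝ) ^ t := by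
  rw [scale_eq _ (by unfold qq; exact Nat.one_le_two_pow), logb_qq, ff_fact]
  unfold qq
  push_cast
  rw [← Real.rpow_natCast 2 (k.factorial ^ 5), ← Real.rpow_mul (by norm_num)]
  push_cast
  rw [mul_comm]

lemma scale_P (j : ℕ) (t : ℝ) : intScale1 5 2 (pp (j + 1)) t = A j ^ t := scale_qq (2 * j + 3) t

lemma le_pow5 (a : ℕ) : a ≤ a ^ 5 := Nat.le_self_pow (by norm_num) _

lemma scale_lower (t : ℝ) (ht : 1 < t) : ∃ η : ℝ, 0 < η ∧ ∃ J0 : ℕ, ∀ J ≥ J0, ∀ n : ℕ,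
    P (J + 1) / LL J ^ 2 ≤ n → LL J * A J ^ η ≤ intScale1 5 2 n t := by
  obtain ⟨J0, hJ0⟩ := exists_nat_ge ((4 * t + 1) / ((t - 1) / 2))
  refine ⟨(t - 1) / 2, by linarith, J0, ?_⟩
  intro J hJ n hn
  set E : ℝ := ((2 * J + 3).factorial : ℝ) ^ 5 with hE
  set κ : ℝ := ((2 * J + 4 : ℕ) : ℝ) ^ 5 with hκ
  have hκ1 : (1024 : ℝ) ≤ κ := by
    have : 4 ^ 5 ≤ (2 * J + 4) ^ 5 := Nat.pow_le_pow_left (by omega) 5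
    rw [hκ]; exact_mod_cast this
  have hκJ : (J : ℝ) + 1 ≤ κ := by
    have := le_pow5 (2 * J + 4)
    have h : J + 1 ≤ (2 * J + 4) ^ 5 := by omega
    rw [hκ]; exact_mod_cast h
  have hE1 : 1 ≤ E := one_le_pow₀ (by exact_mod_cast Nat.factorial_pos _)
  have hκE : κ * E = ((2 * J + 4).factorial : ℝ) ^ 5 := by
    rw [hκ, hE, ← mul_pow, Nat.factorial_succ (2 * J + 3)]; push_cast; ring
  have hlA : Real.logb 2 (A J) = E := logb_qq (2 * J + 3)
  have hlP : Real.logb 2 (P (J + 1)) = κ * E := by rw [hκE]; exact logb_qq (2 * J + 4)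
  have hApos := A_pos J
  have hA2 : A J = 2 ^ E := by
    rw [← hlA, Real.rpow_logb (by norm_num) (by norm_num) hApos]
  have hlL : Real.logb 2 (LL J) ≤ 2 * E := by
    have := Real.logb_le_logb_of_le (b := 2) (by norm_num) (LL_pos J) (LL_le J)
    rw [Real.logb_pow, hlA] at this
    exact_mod_cast this
  have hmpos : 0 < P (J + 1) / LL J ^ 2 := div_pos (P_pos _) (pow_pos (LL_pos J) 2)
  have hnpos : (0 : ℝ) < n := hmpos.trans_le hn
  have hn1 : 1 ≤ n := by exact_mod_cast hnpos
  have hlog : (κ - 4) * E ≤ Real.logb 2 n := by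
    have := Real.logb_le_logb_of_le (b := 2) (by norm_num) hmpos hn
    rw [Real.logb_div (P_pos _).ne' (pow_pos (LL_pos J) 2).ne', Real.logb_pow, hlP] at this
    push_cast at this
    linarith
  have hu : 32 ≤ (κ - 4) * E := by nlinarith
  have hff : (κ - 4) / κ * E ≤ ff (Real.logb 2 n) := by
    refine le_trans ?_ (ff_mono hu hlog)
    unfold ff
    have h1 := Inv_mono (y := (κ - 4) * E) (z := κ * E) (by linarith) (by linarith)
    have h2 : GammaRInv 5 (κ * E) = κ := by
      rw [hκE]; exact Inv_fact (2 * J + 4) (by omega)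
    rw [h2] at h1
    have h3 := (Inv_spec (y := (κ - 4) * E) (by linarith)).1
    rw [div_mul_eq_mul_div]
    exact div_le_div_of_nonneg_left (by linarith) (by linarith) h1
  have hJpos : (0 : ℝ) < J + 1 := by positivity
  have hPA : P J ≤ A J ^ (1 / ((J : ℝ) + 1)) := by
    have h1 : P J ^ (J + 1) ≤ A J := by
      have h2 : pp J ^ (J + 1) ≤ AA J := by
        rw [AA_eq]
        apply Nat.pow_le_pow_right (pp_pos J)
        have := le_pow5 (2 * J + 3)
        omega
      unfold P A; exact_mod_cast h2
    calc P J = (P J ^ (J + 1)) ^ (1 / ((J : ℝ) + 1)) := by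
          rw [← Real.rpow_natCast, ← Real.rpow_mul (P_pos J).le]
          push_cast
          rw [mul_one_div_cancel hJpos.ne', Real.rpow_one]
      _ ≤ _ := Real.rpow_le_rpow (pow_nonneg (P_pos J).le _) h1 (by positivity)
  rw [scale_eq n hn1]
  calc LL J * A J ^ ((t - 1) / 2)
      ≤ A J ^ (1 / ((J : ℝ) + 1)) * A J * A J ^ ((t - 1) / 2) := by
        unfold LL
        gcongr
    _ = A J ^ (1 / ((J : ℝ) + 1) + 1 + (t - 1) / 2) := by
        rw [Real.rpow_add hApos, Real.rpow_add hApos, Real.rpow_one]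
    _ = 2 ^ (E * (1 / ((J : ℝ) + 1) + 1 + (t - 1) / 2)) := by
        rw [hA2, ← Real.rpow_mul (by norm_num)]
    _ ≤ 2 ^ (t * ff (Real.logb 2 n)) := by
        apply Real.rpow_le_rpow_of_exponent_le (by norm_num)
        have h5 : t * ((κ - 4) / κ * E) ≤ t * ff (Real.logb 2 n) :=
          mul_le_mul_of_nonneg_left hff (by linarith)
        refine le_trans ?_ h5
        have h6 : 1 / ((J : ℝ) + 1) + 1 + (t - 1) / 2 ≤ t * ((κ - 4) / κ) := by
          have h7 : (κ - 4) / κ = 1 - 4 / κ := by field_simp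
          have h8 : 4 / κ ≤ 4 / ((J : ℝ) + 1) :=
            div_le_div_of_nonneg_left (by norm_num) hJpos hκJ
          have h9 : (4 * t + 1) / ((J : ℝ) + 1) ≤ (t - 1) / 2 := by
            rw [div_le_iff₀ (by linarith)] at hJ0
            rw [div_le_iff₀ hJpos]
            have : (J0 : ℝ) ≤ J := by exact_mod_cast hJ
            nlinarith
          have h10 : t * (4 / κ) ≤ t * (4 / ((J : ℝ) + 1)) :=
            mul_le_mul_of_nonneg_left h8 (by linarith)
          have h11 : (4 * t + 1) / ((J : ℝ) + 1) = t * (4 / ((J : ℝ) + 1)) + 1 / ((J : ℝ) + 1) := by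
            field_simp
          rw [h7]
          nlinarith
        calc E * (1 / ((J : ℝ) + 1) + 1 + (t - 1) / 2) ≤ E * (t * ((κ - 4) / κ)) :=
              mul_le_mul_of_nonneg_left h6 (by linarith)
          _ = _ := by ring

end SE
end

open MeasureTheory Filter Set
open scoped Topology ENNReal NNReal
noncomputable section
namespace SE

/-! ### Unique ergodicity of irrational translations of the 2-torus -/

def Indep (α β : ℝ) : Prop := ∀ m l : ℤ, (m ≠ 0 ∨ l ≠ 0) → ∀ k : ℤ, m * α + l * β ≠ k

lemma exists_beta (α : ℝ) (hα : Irrational α) : ∃ β, Indep α β := by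
  let S : Set ℝ := ⋃ (t : ℤ × ℤ × ℤ), {((t.1 : ℝ) - t.2.1 * α) / t.2.2}
  have hS : S.Countable := Set.countable_iUnion fun t => Set.countable_singleton _
  obtain ⟨β, hβ⟩ : ∃ β, β ∉ S := by
    by_contra h
    push Not at h
    have : S = Set.univ := Set.eq_univ_of_forall h
    rw [this] at hS
    exact Cardinal.not_countable_real hS
  refine ⟨β, ?_⟩
  intro m l hml k hk
  by_cases hl : l = 0
  · subst hl
    have hm : m ≠ 0 := by simpa using hml
    apply hα
    refine ⟨(k : ℚ) / m, ?_⟩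
    have hm' : (m : ℝ) ≠ 0 := by exact_mod_cast hm
    push_cast
    rw [← hk]; field_simp; simp
  · apply hβ
    refine Set.mem_iUnion.2 ⟨(k, m, l), ?_⟩
    have hl' : (l : ℝ) ≠ 0 := by exact_mod_cast hl
    simp only [Set.mem_singleton_iff]
    rw [← hk]; field_simp; ring

lemma char_integral_zero {α β : ℝ} (h : Indep α β) (μ : Measure Torus2) [IsProbabilityMeasure μ]
    (hμ : MeasurePreserving (fun z : Torus2 => z + ((α : Torus1), (β : Torus1))) μ μ)
    (m l : ℤ) (hml : m ≠ 0 ∨ l ≠ 0) :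
    ∫ z : Torus2, (fourier m z.1 : ℂ) * fourier l z.2 ∂μ = 0 := by
  set F : Torus2 → ℂ := fun z => (fourier m z.1 : ℂ) * fourier l z.2 with hF
  have hFc : Continuous F := by
    apply Continuous.mul
    · exact (fourier m).continuous.comp continuous_fst
    · exact (fourier l).continuous.comp continuous_snd
  set c : ℂ := (fourier m (α : Torus1) : ℂ) * fourier l (β : Torus1) with hc
  have h1 : ∫ z, F z ∂μ = ∫ z, F (z + ((α : Torus1), (β : Torus1))) ∂μ := by
    conv_lhs => rw [← hμ.map_eq]
    rw [integral_map hμ.measurable.aemeasurable hFc.aestronglyMeasurable]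
  have h2 : ∀ z : Torus2, F (z + ((α : Torus1), (β : Torus1))) = c * F z := by
    intro z
    simp only [hF, hc, Prod.fst_add, Prod.snd_add]
    have e1 : ∀ (n : ℤ) (x y : Torus1), (fourier n (x + y) : ℂ) = fourier n x * fourier n y := by
      intro n x y
      simp [fourier_apply, smul_add, AddCircle.toCircle_add]
    rw [e1, e1]; ring
  simp_rw [h2] at h1
  rw [integral_const_mul] at h1
  have hc1 : c ≠ 1 := by
    rw [hc, fourier_coe_apply, fourier_coe_apply, ← Complex.exp_add, Ne, Complex.exp_eq_one_iff]
    rintro ⟨n, hn⟩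
    apply h m l hml n
    have h2pi : (2 * Real.pi * Complex.I : ℂ) ≠ 0 := Complex.two_pi_I_ne_zero
    have : ((m : ℂ) * α + l * β) = n := by
      apply mul_left_cancel₀ h2pi
      simp only [Complex.ofReal_one, div_one] at hn
      linear_combination hn
    exact_mod_cast this
  have h3 : (1 - c) * ∫ z, F z ∂μ = 0 := by linear_combination h1
  rcases mul_eq_zero.1 h3 with h4 | h4
  · exact absurd (sub_eq_zero.1 h4).symm hc1
  · exact h4

lemma ext_torus (μ ν : Measure (UnitAddTorus (Fin 2))) [IsProbabilityMeasure μ]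
    [IsProbabilityMeasure ν]
    (h : ∀ n : Fin 2 → ℤ, ∫ z, UnitAddTorus.mFourier n z ∂μ = ∫ z, UnitAddTorus.mFourier n z ∂ν) :
    μ = ν := by
  have hIntg : ∀ (ρ : Measure (UnitAddTorus (Fin 2))) [IsProbabilityMeasure ρ]
      (f : C(UnitAddTorus (Fin 2), ℂ)), Integrable f ρ := by
    intro ρ _ f
    exact f.continuous.integrable_of_hasCompactSupport (HasCompactSupport.of_compactSpace _)
  have hcont : ∀ (ρ : Measure (UnitAddTorus (Fin 2))) [IsProbabilityMeasure ρ],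
      Continuous (fun f : C(UnitAddTorus (Fin 2), ℂ) => ∫ z, f z ∂ρ) := by
    intro ρ _
    apply LipschitzWith.continuous (K := 1)
    apply LipschitzWith.of_dist_le_mul
    intro f g
    rw [dist_eq_norm, dist_eq_norm, ← integral_sub (hIntg ρ f) (hIntg ρ g)]
    have := norm_integral_le_of_norm_le_const (μ := ρ) (f := fun z => f z - g z) (C := ‖f - g‖)
      (Eventually.of_forall fun z => (f - g).norm_coe_le_norm z)
    simpa using this
  let V : Submodule ℂ C(UnitAddTorus (Fin 2), ℂ) :=
    { carrier := {f | ∫ z, f z ∂μ = ∫ z, f z ∂ν}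
      add_mem' := by
        intro f g hf hg
        simp only [Set.mem_ofPred_eq, ContinuousMap.add_apply] at *
        rw [integral_add (hIntg μ f) (hIntg μ g), integral_add (hIntg ν f) (hIntg ν g), hf, hg]
      zero_mem' := by simp
      smul_mem' := by
        intro c f hf
        simp only [Set.mem_ofPred_eq, ContinuousMap.smul_apply] at *
        rw [integral_smul, integral_smul, hf] }
  have hVc : IsClosed (V : Set C(UnitAddTorus (Fin 2), ℂ)) := isClosed_eq (hcont μ) (hcont ν)
  have hV : V = ⊤ := by
    rw [eq_top_iff, ← UnitAddTorus.span_mFourier_closure_eq_top]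
    apply Submodule.topologicalClosure_minimal _ _ hVc
    rw [Submodule.span_le]
    rintro _ ⟨n, rfl⟩
    exact h n
  apply ext_of_forall_integral_eq_of_IsFiniteMeasure
  intro f
  let g : C(UnitAddTorus (Fin 2), ℂ) := ⟨fun z => (f z : ℂ), Complex.continuous_ofReal.comp f.continuous⟩
  have hg : g ∈ V := by rw [hV]; trivial
  have hg' : ∫ z, ((f z : ℝ) : ℂ) ∂μ = ∫ z, ((f z : ℝ) : ℂ) ∂ν := hg
  rw [integral_complex_ofReal, integral_complex_ofReal] at hg'
  exact_mod_cast hg'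

lemma rot_unique {α β : ℝ} (h : Indep α β) (μ ν : Measure Torus2) [IsProbabilityMeasure μ]
    [IsProbabilityMeasure ν]
    (hμ : MeasurePreserving (fun z : Torus2 => z + ((α : Torus1), (β : Torus1))) μ μ)
    (hν : MeasurePreserving (fun z : Torus2 => z + ((α : Torus1), (β : Torus1))) ν ν) :
    μ = ν := by
  let e : (Fin 2 → Torus1) ≃ᵐ Torus2 := MeasurableEquiv.finTwoArrow
  have key : ∀ (ρ : Measure Torus2) [IsProbabilityMeasure ρ]
      (hρ : MeasurePreserving (fun z : Torus2 => z + ((α : Torus1), (β : Torus1))) ρ ρ)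
      (n : Fin 2 → ℤ), ∫ z, UnitAddTorus.mFourier n z ∂(ρ.map e.symm) =
        if n = 0 then 1 else 0 := by
    intro ρ _ hρ n
    rw [integral_map e.symm.measurable.aemeasurable
      (UnitAddTorus.mFourier n).continuous.aestronglyMeasurable]
    have e1 : ∀ z : Torus2, UnitAddTorus.mFourier n (e.symm z)
        = (fourier (n 0) z.1 : ℂ) * fourier (n 1) z.2 := by
      intro z
      simp only [UnitAddTorus.mFourier, ContinuousMap.coe_mk, Fin.prod_univ_two]
      rfl
    simp_rw [e1]
    split_ifs with hn
    · subst hn; simp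
    · apply char_integral_zero h ρ hρ
      by_contra hcon
      push Not at hcon
      apply hn
      ext i; fin_cases i
      · exact hcon.1
      · exact hcon.2
  have : IsProbabilityMeasure (μ.map e.symm) := Measure.isProbabilityMeasure_map e.symm.measurable.aemeasurable
  have : IsProbabilityMeasure (ν.map e.symm) := Measure.isProbabilityMeasure_map e.symm.measurable.aemeasurable
  have h1 : μ.map e.symm = ν.map e.symm := ext_torus _ _ fun n => by rw [key μ hμ, key ν hν]
  have h2 := congrArg (Measure.map e) h1
  rwa [Measure.map_map e.measurable e.symm.measurable, Measure.map_map e.measurable e.symm.measurable,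
    MeasurableEquiv.self_comp_symm, Measure.map_id, Measure.map_id] at h2

lemma vol_rot (v : Torus2) : MeasurePreserving (fun z : Torus2 => z + v) volume volume :=
  (measurePreserving_add_right (volume : Measure Torus1) v.1).prod
    (measurePreserving_add_right (volume : Measure Torus1) v.2)

instance : IsProbabilityMeasure (volume : Measure Torus1) := by
  refine ⟨?_⟩
  simp

instance : IsProbabilityMeasure (volume : Measure Torus2) := by
  unfold Torus2; rw [Measure.volume_eq_prod]; infer_instance

lemma rot_unique1 {α β : ℝ} (h : Indep α β) (μ : Measure Torus1) [IsProbabilityMeasure μ]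
    (hμ : MeasurePreserving (fun z : Torus1 => z + (α : Torus1)) μ μ) : μ = volume := by
  have h1 : MeasurePreserving (fun z : Torus2 => z + ((α : Torus1), (β : Torus1)))
      (μ.prod volume) (μ.prod volume) := by
    exact hμ.prod (measurePreserving_add_right (volume : Measure Torus1) (β : Torus1))
  have h2 := rot_unique h _ _ h1 (vol_rot _)
  have h3 := congrArg (Measure.map Prod.fst) h2
  have h4 : (volume : Measure Torus2) = (volume : Measure Torus1).prod volume :=
    Measure.volume_eq_prod _ _
  rw [h4, Measure.map_fst_prod, Measure.map_fst_prod] at h3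
  simpa using h3

end SE
end

open MeasureTheory Filter Set
open scoped Topology ENNReal NNReal
noncomputable section
namespace SE

/-! ### Spikes -/

def gR (M : ℕ) (θ : ℝ) : ℝ := ((1 + Real.cos (2 * Real.pi * θ)) / 2) ^ M

lemma gR_per (M : ℕ) : Function.Periodic (gR M) 1 := by
  intro θ
  unfold gR
  rw [show 2 * Real.pi * (θ + 1) = 2 * Real.pi * θ + 2 * Real.pi by ring, Real.cos_add_two_pi]

def gC (M : ℕ) : Torus1 → ℝ := (gR_per M).lift

lemma gC_coe (M : ℕ) (θ : ℝ) : gC M (θ : Torus1) = gR M θ := Function.Periodic.lift_coe _ _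

lemma gR_nonneg (M : ℕ) (θ : ℝ) : 0 ≤ gR M θ := by
  unfold gR
  have := Real.neg_one_le_cos (2 * Real.pi * θ)
  apply pow_nonneg; linarith

lemma gR_le_one (M : ℕ) (θ : ℝ) : gR M θ ≤ 1 := by
  unfold gR
  have := Real.neg_one_le_cos (2 * Real.pi * θ)
  have := Real.cos_le_one (2 * Real.pi * θ)
  apply pow_le_one₀ <;> linarith

lemma exists_rep (x : Torus1) : ∃ r : ℝ, (r : Torus1) = x ∧ |r| = ‖x‖ ∧ |r| ≤ 1 / 2 := by
  induction x using QuotientAddGroup.induction_on with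
  | H z =>
  refine ⟨z - round z, ?_, ?_, abs_sub_round z⟩
  · rw [AddCircle.coe_sub]
    have : ((round z : ℝ) : Torus1) = 0 := by
      rw [AddCircle.coe_eq_zero_iff]; exact ⟨round z, by simp⟩
    rw [this, sub_zero]
  · have := AddCircle.norm_eq (p := (1 : ℝ)) (x := z)
    simp only [inv_one, one_mul, mul_one] at this
    exact this.symm

lemma gC_nonneg (M : ℕ) (x : Torus1) : 0 ≤ gC M x := by
  obtain ⟨r, rfl, -⟩ := exists_rep x
  rw [gC_coe]; exact gR_nonneg M r

lemma gC_le_one (M : ℕ) (x : Torus1) : gC M x ≤ 1 := by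
  obtain ⟨r, rfl, -⟩ := exists_rep x
  rw [gC_coe]; exact gR_le_one M r

lemma gR_smooth (M : ℕ) (n : WithTop ℕ∞) : ContDiff ℝ n (gR M) := by
  unfold gR
  fun_prop

lemma gR_cont (M : ℕ) : Continuous (gR M) := (gR_smooth M 0).continuous

lemma gC_cont (M : ℕ) : Continuous (gC M) :=
  continuous_coinduced_dom.2 (gR_cont M)

lemma pow_mul_le (n : ℕ) (u : ℝ) (h0 : 0 ≤ u) (h1 : u ≤ 1) : n * (u ^ n * (1 - u)) ≤ 1 := by
  have h : (∑ i ∈ Finset.range n, u ^ i) * (1 - u) = 1 - u ^ n := by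
    have := geom_sum_mul u n
    linarith
  have h2 : (n : ℝ) * u ^ n ≤ ∑ i ∈ Finset.range n, u ^ i := by
    have : ∑ i ∈ Finset.range n, u ^ n ≤ ∑ i ∈ Finset.range n, u ^ i :=
      Finset.sum_le_sum fun i hi =>
        pow_le_pow_of_le_one h0 h1 (Finset.mem_range.1 hi).le
    simpa using this
  have h3 := mul_le_mul_of_nonneg_right h2 (sub_nonneg.2 h1)
  have : 0 ≤ u ^ n := pow_nonneg h0 n
  linarith

lemma gR_hasDeriv (M : ℕ) (θ : ℝ) : HasDerivAt (gR M)
    (M * ((1 + Real.cos (2 * Real.pi * θ)) / 2) ^ (M - 1) *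
      (-(Real.sin (2 * Real.pi * θ)) * Real.pi)) θ := by
  unfold gR
  have h1 : HasDerivAt (fun θ : ℝ => 2 * Real.pi * θ) (2 * Real.pi) θ := by
    simpa using (hasDerivAt_id θ).const_mul (2 * Real.pi)
  have h2 := ((h1.cos.const_add 1).div_const 2).pow M
  exact h2.congr_deriv (by ring)

lemma gR_deriv_bound (a : ℕ) (ha : 1 ≤ a) (θ : ℝ) :
    |((a ^ 2 : ℕ) : ℝ) * ((1 + Real.cos (2 * Real.pi * θ)) / 2) ^ (a ^ 2 - 1) *
      (-(Real.sin (2 * Real.pi * θ)) * Real.pi)| ≤ 2 * Real.pi * a := by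
  have hpi := Real.pi_pos
  apply abs_le_of_sq_le_sq _ (by positivity)
  set c := Real.cos (2 * Real.pi * θ) with hc
  set s := Real.sin (2 * Real.pi * θ) with hs
  have hsc : s ^ 2 = 1 - c ^ 2 := by
    have := Real.sin_sq_add_cos_sq (2 * Real.pi * θ); linarith
  set u := (1 + c) / 2 with hu
  have hc1 : -1 ≤ c := Real.neg_one_le_cos _
  have hc2 : c ≤ 1 := Real.cos_le_one _
  have hu0 : 0 ≤ u := by linarith
  have hu1 : u ≤ 1 := by linarith
  have hsu : s ^ 2 = 4 * (u * (1 - u)) := by rw [hsc, hu]; ring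
  obtain ⟨N, hN⟩ : ∃ N, a ^ 2 = N + 1 := ⟨a ^ 2 - 1, by
    have : 1 ≤ a ^ 2 := Nat.one_le_pow _ _ ha
    omega⟩
  have haN : (a : ℝ) ^ 2 = N + 1 := by exact_mod_cast hN
  rw [hN, Nat.add_sub_cancel]
  have h1 := pow_mul_le (2 * N + 1) u hu0 hu1
  have h2 : (((N + 1 : ℕ) : ℝ) * u ^ N * (-s * Real.pi)) ^ 2
      = 4 * Real.pi ^ 2 * ((N + 1) ^ 2 * (u ^ (2 * N + 1) * (1 - u))) := by
    push_cast
    calc _ = (N + 1) ^ 2 * u ^ (2 * N) * s ^ 2 * Real.pi ^ 2 := by ring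
      _ = _ := by rw [hsu]; ring
  rw [h2]
  have h3 : (2 * Real.pi * a) ^ 2 = 4 * Real.pi ^ 2 * (N + 1) := by rw [← haN]; ring
  rw [h3]
  apply mul_le_mul_of_nonneg_left _ (by positivity)
  have hw : 0 ≤ u ^ (2 * N + 1) * (1 - u) := mul_nonneg (pow_nonneg hu0 _) (by linarith)
  push_cast at h1
  have hN0 : (0 : ℝ) ≤ N := Nat.cast_nonneg _
  have h4 : ((N : ℝ) + 1) * (u ^ (2 * N + 1) * (1 - u)) ≤ 1 := by nlinarith
  calc ((N : ℝ) + 1) ^ 2 * (u ^ (2 * N + 1) * (1 - u))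
      = (N + 1) * ((N + 1) * (u ^ (2 * N + 1) * (1 - u))) := by ring
    _ ≤ (N + 1) * 1 := mul_le_mul_of_nonneg_left h4 (by linarith)
    _ = _ := by ring

lemma gR_lip (a : ℕ) (ha : 1 ≤ a) (s t : ℝ) :
    |gR (a ^ 2) s - gR (a ^ 2) t| ≤ 2 * Real.pi * a * |s - t| := by
  have := Convex.norm_image_sub_le_of_norm_hasDerivWithin_le (f := gR (a ^ 2)) (s := Set.univ)
    (x := t) (y := s) (C := 2 * Real.pi * a)
    (fun x _ => (gR_hasDeriv (a ^ 2) x).hasDerivWithinAt)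
    (fun x _ => gR_deriv_bound a ha x) convex_univ trivial trivial
  exact this

lemma gC_lip (a : ℕ) (ha : 1 ≤ a) (x y : Torus1) :
    |gC (a ^ 2) x - gC (a ^ 2) y| ≤ 2 * Real.pi * a * ‖x - y‖ := by
  obtain ⟨r, hr, hr2, -⟩ := exists_rep (x - y)
  obtain ⟨b, rfl, -⟩ := exists_rep y
  have hx : x = ((b + r : ℝ) : Torus1) := by rw [AddCircle.coe_add, hr]; abel
  rw [← hr2, hx, gC_coe, gC_coe]
  have := gR_lip a ha (b + r) b
  simpa using this

lemma gC_decay (M : ℕ) (x : Torus1) : gC M x * (1 + 4 * M * ‖x‖ ^ 2) ≤ 1 := by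
  obtain ⟨r, rfl, hr, hr2⟩ := exists_rep x
  rw [gC_coe, ← hr, sq_abs]
  unfold gR
  have hpi := Real.pi_pos
  have hc : (1 + Real.cos (2 * Real.pi * r)) / 2 = 1 - Real.sin (Real.pi * r) ^ 2 := by
    rw [show 2 * Real.pi * r = 2 * (Real.pi * r) by ring, Real.cos_two_mul, Real.cos_sq']; ring
  rw [hc]
  set s := Real.sin (Real.pi * r) ^ 2 with hs
  have hs1 : s ≤ 1 := by rw [hs]; exact Real.sin_sq_le_one _
  have hs0 : 0 ≤ s := sq_nonneg _
  have hsr : 4 * r ^ 2 ≤ s := by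
    have h1 : 2 / Real.pi * (Real.pi * |r|) ≤ Real.sin (Real.pi * |r|) :=
      Real.mul_le_sin (by positivity) (by nlinarith [abs_nonneg r])
    have h2 : 2 / Real.pi * (Real.pi * |r|) = 2 * |r| := by field_simp
    rw [h2] at h1
    have h3 : Real.sin (Real.pi * |r|) ^ 2 = s := by
      rw [hs]
      rcases abs_choice r with h | h <;> rw [h]
      rw [mul_neg, Real.sin_neg, neg_sq]
    rw [← h3]
    have h4 := pow_le_pow_left₀ (by positivity) h1 2
    rw [mul_pow, sq_abs] at h4
    linarith
  have hM : (1 + M * s) ≤ (1 + s) ^ M := by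
    have := one_add_mul_le_pow (a := s) (by linarith) M
    linarith
  have hp : 0 ≤ (1 - s) ^ M := pow_nonneg (by linarith) _
  have hM0 : (0 : ℝ) ≤ M := Nat.cast_nonneg _
  calc (1 - s) ^ M * (1 + 4 * M * r ^ 2) ≤ (1 - s) ^ M * (1 + M * s) := by
        apply mul_le_mul_of_nonneg_left _ hp
        nlinarith
    _ ≤ (1 - s) ^ M * (1 + s) ^ M := mul_le_mul_of_nonneg_left hM hp
    _ = (1 - s ^ 2) ^ M := by rw [← mul_pow]; ring
    _ ≤ 1 := by
      apply pow_le_one₀ <;> nlinarith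

lemma wallis_bound (M : ℕ) :
    ((∏ i ∈ Finset.range M, (2 * (i : ℝ) + 1) / (2 * i + 2))) ^ 2 * (M + 1) ≤ 1 := by
  induction M with
  | zero => simp
  | succ n ih =>
    rw [Finset.prod_range_succ, mul_pow]
    push_cast
    set W := (∏ i ∈ Finset.range n, (2 * (i : ℝ) + 1) / (2 * i + 2)) ^ 2
    have hW : 0 ≤ W := sq_nonneg _
    have h : ((2 * (n : ℝ) + 1) / (2 * n + 2)) ^ 2 * (n + 1 + 1) ≤ n + 1 := by
      rw [div_pow, div_mul_eq_mul_div, div_le_iff₀ (by positivity)]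
      nlinarith [(Nat.cast_nonneg n : (0 : ℝ) ≤ n), mul_nonneg (Nat.cast_nonneg n : (0 : ℝ) ≤ n) (Nat.cast_nonneg n : (0 : ℝ) ≤ n)]
    calc W * ((2 * (n : ℝ) + 1) / (2 * n + 2)) ^ 2 * (n + 1 + 1)
        = W * (((2 * (n : ℝ) + 1) / (2 * n + 2)) ^ 2 * (n + 1 + 1)) := by ring
      _ ≤ W * (n + 1) := mul_le_mul_of_nonneg_left h hW
      _ ≤ 1 := ih

lemma gC_integral (a : ℕ) (ha : 1 ≤ a) : ∫ x : Torus1, gC (a ^ 2) x ≤ 1 / a := by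
  have h1 := AddCircle.intervalIntegral_preimage (1 : ℝ) (-(1 / 2)) (gC (a ^ 2))
  rw [← h1]
  simp_rw [gC_coe]
  have h2 : ∀ θ : ℝ, gR (a ^ 2) θ = (fun u => Real.sin u ^ (2 * a ^ 2)) (Real.pi * θ + Real.pi / 2) := by
    intro θ
    unfold gR
    simp only
    rw [Real.sin_add_pi_div_two, pow_mul, Real.cos_sq]
    congr 1
    rw [show 2 * (Real.pi * θ) = 2 * Real.pi * θ by ring]; ring
  simp_rw [h2]
  rw [intervalIntegral.integral_comp_mul_add (fun u => Real.sin u ^ (2 * a ^ 2)) Real.pi_pos.ne'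
    (Real.pi / 2)]
  rw [show Real.pi * -(1 / 2) + Real.pi / 2 = 0 by ring,
    show Real.pi * (-(1 / 2) + 1) + Real.pi / 2 = Real.pi by ring, integral_sin_pow_even]
  rw [smul_eq_mul, ← mul_assoc, inv_mul_cancel₀ Real.pi_pos.ne', one_mul]
  have h3 := wallis_bound (a ^ 2)
  set W := ∏ i ∈ Finset.range (a ^ 2), (2 * (i : ℝ) + 1) / (2 * i + 2)
  have ha0 : (0 : ℝ) < a := by exact_mod_cast ha
  rw [le_div_iff₀ ha0]
  apply le_of_sq_le_sq _ (by norm_num : (0 : ℝ) ≤ 1)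
  push_cast at h3
  nlinarith [sq_nonneg W]

lemma gC_lintegral (a : ℕ) (ha : 1 ≤ a) :
    ∫⁻ x : Torus1, ENNReal.ofReal (gC (a ^ 2) x) ≤ ENNReal.ofReal (1 / a) := by
  rw [← ofReal_integral_eq_lintegral_ofReal]
  · exact ENNReal.ofReal_le_ofReal (gC_integral a ha)
  · exact (gC_cont _).integrable_of_hasCompactSupport (HasCompactSupport.of_compactSpace _)
  · exact Eventually.of_forall fun x => gC_nonneg _ x

end SE
end

open MeasureTheory Filter Set
open scoped Topology ENNReal NNReal
noncomputable section
namespace SE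

/-! ### The cocycle -/

def al : Torus1 := (alpha : ℝ)
def betaR : ℝ := (exists_beta alpha alpha_irr).choose
lemma indep : Indep alpha betaR := (exists_beta alpha alpha_irr).choose_spec
def be : Torus1 := (betaR : ℝ)

def psi (j : ℕ) (x : Torus1) : ℝ := gC (AA j ^ 2) (pp j • x) / 2

lemma psi_nonneg (j : ℕ) (x : Torus1) : 0 ≤ psi j x := by
  have := gC_nonneg (AA j ^ 2) (pp j • x)
  unfold psi; linarith

lemma psi_cont (j : ℕ) : Continuous (psi j) := by
  unfold psi
  exact ((gC_cont _).comp (continuous_const_smul _)).div_const 2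

lemma psi_lip (j : ℕ) (x y : Torus1) :
    |psi j x - psi j y| ≤ Real.pi * A j * ‖pp j • (x - y)‖ := by
  have h := gC_lip (AA j) (AA_pos j) (pp j • x) (pp j • y)
  rw [← smul_sub] at h
  unfold psi
  rw [← sub_div, abs_div, abs_of_pos (by norm_num : (0 : ℝ) < 2), div_le_iff₀ (by norm_num)]
  unfold A
  linarith

lemma psi_lip' (j : ℕ) (x y : Torus1) :
    |psi j x - psi j y| ≤ Real.pi * LL j * ‖x - y‖ := by
  refine (psi_lip j x y).trans ?_
  have h1 : ‖pp j • (x - y)‖ ≤ P j * ‖x - y‖ := norm_nsmul_le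
  have := A_pos j
  calc _ ≤ Real.pi * A j * (P j * ‖x - y‖) := by gcongr
    _ = _ := by unfold LL; ring

lemma norm_coe_le (r : ℝ) : ‖(r : Torus1)‖ ≤ |r| := by
  rw [AddCircle.norm_eq]
  simp only [inv_one, one_mul, mul_one]
  simpa using round_le r 0

lemma pp_smul_al (j n : ℕ) : pp j • (n • al) = ((n * dl j : ℝ) : Torus1) := by
  rw [smul_comm]; unfold al; rw [pp_alpha, ← AddCircle.coe_nsmul, nsmul_eq_mul]

def D (n j : ℕ) (x : Torus1) : ℝ := psi j (x + n • al) - psi j x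

lemma D_le (n j : ℕ) (x : Torus1) : |D n j x| ≤ 2 * Real.pi * n * tau j := by
  unfold D
  refine (psi_lip j _ _).trans ?_
  rw [add_sub_cancel_left, pp_smul_al]
  have h1 : ‖((n * dl j : ℝ) : Torus1)‖ ≤ n * dl j := by
    refine (norm_coe_le _).trans_eq (abs_of_nonneg ?_)
    have := dl_pos j
    positivity
  have h2 := Adl_le j
  have := A_pos j
  have hpi := Real.pi_pos
  calc _ ≤ Real.pi * A j * (n * dl j) := by gcongr
    _ = Real.pi * n * (A j * dl j) := by ring
    _ ≤ Real.pi * n * (2 * tau j) := by gcongr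
    _ = _ := by ring

lemma summ_D (n : ℕ) (x : Torus1) : Summable (fun j => D n j x) := by
  apply Summable.of_norm_bounded (summ_tau.mul_left (2 * Real.pi * n))
  intro j; exact D_le n j x

def S (n : ℕ) (x : Torus1) : ℝ := ∑' j, D n j x

lemma S_zero (x : Torus1) : S 0 x = 0 := by simp [S, D]

lemma S_succ (n : ℕ) (x : Torus1) : S (n + 1) x = S n x + S 1 (x + n • al) := by
  unfold S
  rw [← (summ_D n x).tsum_add (summ_D 1 _)]
  congr 1; ext j
  simp only [D, one_smul, add_smul, ← add_assoc]
  ring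

lemma S_cont (n : ℕ) : Continuous (S n) := by
  unfold S
  refine continuous_tsum (fun j => ?_) (summ_tau.mul_left (2 * Real.pi * n)) (fun j x => D_le n j x)
  unfold D
  exact ((psi_cont j).comp (continuous_add_const _)).sub (psi_cont j)

/-- General splitting estimate at level `J`. -/
lemma S_split (n J : ℕ) (x : Torus1) :
    |S n x - ∑ j ∈ Finset.range J, D n j x| ≤ 4 * Real.pi * n * tau J := by
  have h := (summ_D n x).sum_add_tsum_nat_add J
  have h1 : S n x - ∑ j ∈ Finset.range J, D n j x = ∑' j, D n (j + J) x := by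
    unfold S; linarith
  rw [h1]
  have hs : Summable (fun j => 2 * Real.pi * n * tau (j + J)) :=
    ((summable_nat_add_iff J).2 summ_tau).mul_left _
  have h2 : ‖∑' j, D n (j + J) x‖ ≤ ∑' j, 2 * Real.pi * n * tau (j + J) :=
    tsum_of_norm_bounded hs.hasSum (fun j => D_le n (j + J) x)
  rw [tsum_mul_left] at h2
  refine h2.trans ?_
  have := tsum_tau J
  have hpi := Real.pi_pos
  calc _ ≤ 2 * Real.pi * n * (2 * tau J) := by gcongr
    _ = _ := by ring

lemma D_lip (n j : ℕ) (x x' : Torus1) : |D n j x - D n j x'| ≤ 2 * Real.pi * LL j * ‖x - x'‖ := by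
  have h1 := psi_lip' j (x + n • al) (x' + n • al)
  have h2 := psi_lip' j x x'
  rw [add_sub_add_right_eq_sub] at h1
  unfold D
  rw [abs_le] at *
  constructor <;> linarith [h1.1, h1.2, h2.1, h2.2]

lemma sumD_lip (n J : ℕ) (x x' : Torus1) :
    |∑ j ∈ Finset.range J, D n j x - ∑ j ∈ Finset.range J, D n j x'|
      ≤ 2 * Real.pi * (∑ j ∈ Finset.range J, LL j) * ‖x - x'‖ := by
  rw [← Finset.sum_sub_distrib, Finset.mul_sum, Finset.sum_mul]
  exact (Finset.abs_sum_le_sum_abs _ _).trans (Finset.sum_le_sum fun j _ => D_lip n j x x')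

lemma S_lip (n J : ℕ) (x x' : Torus1) :
    |S n x - S n x'| ≤ 2 * Real.pi * (∑ j ∈ Finset.range J, LL j) * ‖x - x'‖
      + 8 * Real.pi * n * tau J := by
  have h1 := S_split n J x
  have h2 := S_split n J x'
  have h3 := sumD_lip n J x x'
  rw [abs_le] at *
  constructor <;> linarith [h1.1, h1.2, h2.1, h2.2]

/-! ### The diffeomorphism -/

def T (z : Torus2) : Torus2 := (z.1 + al, z.2 + be + ((S 1 z.1 : ℝ) : Torus1))

lemma T_iter (n : ℕ) (z : Torus2) :
    T^[n] z = (z.1 + n • al, z.2 + n • be + ((S n z.1 : ℝ) : Torus1)) := by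
  induction n with
  | zero => simp [S_zero]
  | succ n ih =>
    rw [Function.iterate_succ_apply', ih]
    rw [S_succ, AddCircle.coe_add, add_smul, add_smul, one_smul, one_smul]
    unfold T
    ext
    · simp only [add_assoc]
    · simp only; abel

lemma coe_cont : Continuous (fun r : ℝ => (r : Torus1)) := AddCircle.continuous_mk' 1

lemma T_cont : Continuous T := by
  unfold T
  have h : Continuous (fun z : Torus2 => ((S 1 z.1 : ℝ) : Torus1)) :=
    coe_cont.comp ((S_cont 1).comp continuous_fst)
  fun_prop

def Tinv (z : Torus2) : Torus2 := (z.1 - al, z.2 - be - ((S 1 (z.1 - al) : ℝ) : Torus1))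

lemma T_Tinv (z : Torus2) : T (Tinv z) = z := by
  ext <;> simp only [T, Tinv, sub_add_cancel]
  abel

lemma Tinv_T (z : Torus2) : Tinv (T z) = z := by
  ext <;> simp only [T, Tinv, add_sub_cancel_right]
  abel

/-! ### Smoothness -/

lemma iter_mul_bound (f g : ℝ → ℝ) (hf : ContDiff ℝ ⊤ f) (hg : ContDiff ℝ ⊤ g) (a b : ℝ)
    (ha : 0 ≤ a)
    (h1 : ∀ i x, ‖iteratedFDeriv ℝ i f x‖ ≤ a ^ i) (h2 : ∀ i x, ‖iteratedFDeriv ℝ i g x‖ ≤ b ^ i) :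
    ∀ i x, ‖iteratedFDeriv ℝ i (fun y => f y * g y) x‖ ≤ (a + b) ^ i := by
  intro i x
  refine (norm_iteratedFDeriv_mul_le hf hg x (n := i) le_top).trans ?_
  rw [add_pow]
  apply Finset.sum_le_sum
  intro k _
  have := h1 k x
  have := h2 (i - k) x
  calc _ ≤ (i.choose k : ℝ) * a ^ k * b ^ (i - k) := by gcongr
    _ = _ := by ring


lemma gR_eq (M : ℕ) : gR M = fun θ => Real.cos (Real.pi * θ) ^ (2 * M) := by
  ext θ
  unfold gR
  rw [pow_mul, show 2 * Real.pi * θ = 2 * (Real.pi * θ) by ring, Real.cos_two_mul]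
  congr 1; ring

lemma gR_iter' (m : ℕ) : ∀ i x, ‖iteratedFDeriv ℝ i (fun θ => Real.cos (Real.pi * θ) ^ m) x‖
    ≤ (m * Real.pi) ^ i := by
  have hc : ContDiff ℝ ⊤ (fun θ => Real.cos (Real.pi * θ)) := by fun_prop
  induction m with
  | zero =>
    intro i x
    simp only [pow_zero, CharP.cast_eq_zero, zero_mul]
    cases i with
    | zero => simp
    | succ i =>
      rw [norm_iteratedFDeriv_eq_norm_iteratedDeriv, iteratedDeriv_const]
      simp
  | succ m ih =>
    have h := iter_mul_bound _ _ (hc.pow m) hc (m * Real.pi) Real.pi (by positivity) ih (by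
      intro i x
      rw [norm_iteratedFDeriv_eq_norm_iteratedDeriv,
        iteratedDeriv_comp_const_mul (f := Real.cos) Real.contDiff_cos, Real.norm_eq_abs, abs_mul,
        abs_pow, abs_of_pos Real.pi_pos]
      exact mul_le_of_le_one_right (by positivity) (Real.abs_iteratedDeriv_cos_le_one i _))
    intro i x
    have := h i x
    simp only [pow_succ]
    refine this.trans_eq ?_
    congr 1; push_cast; ring

lemma gR_iter (M i : ℕ) (x : ℝ) : |iteratedDeriv i (gR M) x| ≤ (2 * M * Real.pi) ^ i := by
  have := gR_iter' (2 * M) i x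
  rw [norm_iteratedFDeriv_eq_norm_iteratedDeriv, ← gR_eq] at this
  push_cast at this
  exact this

lemma gR_iter_diff (M i : ℕ) (x y : ℝ) :
    |iteratedDeriv i (gR M) x - iteratedDeriv i (gR M) y|
      ≤ (2 * M * Real.pi) ^ (i + 1) * |x - y| := by
  have hd : Differentiable ℝ (iteratedDeriv i (gR M)) :=
    (gR_smooth M ⊤).differentiable_iteratedDeriv i (WithTop.coe_lt_top _)
  have := Convex.norm_image_sub_le_of_norm_deriv_le (f := iteratedDeriv i (gR M))
    (C := (2 * M * Real.pi) ^ (i + 1)) (s := Set.univ) (x := y) (y := x)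
    (fun z _ => hd z) (fun z _ => by
      rw [← iteratedDeriv_succ]; exact gR_iter M (i + 1) z) convex_univ (mem_univ _) (mem_univ _)
  simpa using this

lemma D_coe (j : ℕ) (x : ℝ) :
    D 1 j (x : Torus1) = (1 / 2) * (fun y => gR (AA j ^ 2) (y + dl j) - gR (AA j ^ 2) y) (P j * x) := by
  unfold D psi
  rw [smul_add, pp_smul_al, ← AddCircle.coe_nsmul, ← AddCircle.coe_add, gC_coe, gC_coe,
    nsmul_eq_mul]
  simp only [P, Nat.cast_one, one_mul]
  ring

lemma D_iter (j i : ℕ) (x : ℝ) : ‖iteratedFDeriv ℝ i (fun x : ℝ => D 1 j (x : Torus1)) x‖ ≤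
    P j ^ i * (2 * A j ^ 2 * Real.pi) ^ (i + 1) * dl j := by
  have hs := gR_smooth (AA j ^ 2) i
  have hs2 : ContDiff ℝ i (fun y => gR (AA j ^ 2) (y + dl j)) := hs.comp (by fun_prop)
  rw [norm_iteratedFDeriv_eq_norm_iteratedDeriv]
  simp_rw [D_coe]
  rw [iteratedDeriv_const_mul_field, iteratedDeriv_comp_const_mul
    (f := fun y => gR (AA j ^ 2) (y + dl j) - gR (AA j ^ 2) y) (hs2.sub hs)]
  beta_reduce
  rw [iteratedDeriv_fun_sub hs2.contDiffAt hs.contDiffAt, iteratedDeriv_comp_add_const]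
  have h := gR_iter_diff (AA j ^ 2) i (P j * x + dl j) (P j * x)
  rw [add_sub_cancel_left, abs_of_pos (dl_pos j)] at h
  push_cast at h
  rw [Real.norm_eq_abs, abs_mul, abs_mul, abs_of_pos (pow_pos (P_pos j) i)]
  have hP := pow_pos (P_pos j) i
  have h' := mul_le_mul_of_nonneg_left h hP.le
  have h0 := abs_nonneg (iteratedDeriv i (gR (AA j ^ 2)) (P j * x + dl j) -
    iteratedDeriv i (gR (AA j ^ 2)) (P j * x))
  have h0' := mul_nonneg hP.le h0
  rw [abs_of_pos (by norm_num : (0 : ℝ) < 1 / 2)]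
  unfold A
  simp only
  linarith

lemma v_summ (i : ℕ) :
    Summable (fun j => P j ^ i * (2 * A j ^ 2 * Real.pi) ^ (i + 1) * dl j) := by
  refine Summable.of_norm_bounded_eventually_nat (g := fun j => (1 / 2 : ℝ) ^ j)
    (summable_geometric_of_lt_one (by norm_num) (by norm_num)) ?_
  filter_upwards [eventually_ge_atTop i] with j hj
  have hA := A_pos j
  have hA' := A_ge'' j
  have hP := P_pos j
  have hd := dl_pos j
  have hp1 := P_pos (j + 1)
  rw [Real.norm_eq_abs, abs_of_nonneg (by positivity)]
  have h1 : 2 * A j ^ 2 * Real.pi ≤ A j ^ 3 := by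
    have := Real.pi_le_four
    have h2 : 0 < A j ^ 2 := by positivity
    nlinarith
  have hpow : A j ^ (4 * i + 6) ≤ P (j + 1) := by
    have : P (j + 1) = A j ^ ((2 * j + 4) ^ 5) := by
      unfold P A; exact_mod_cast pp_succ j
    rw [this]
    apply pow_le_pow_right₀ (by linarith)
    have h5 : (2 * j + 4) ^ 2 ≤ (2 * j + 4) ^ 5 := Nat.pow_le_pow_right (by omega) (by norm_num)
    nlinarith
  have h3 : dl j ≤ A j ^ 2 / P (j + 1) := by
    refine (dl_le j).trans ?_
    gcongr
    have := P_le_A j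
    nlinarith
  calc _ ≤ A j ^ i * (A j ^ 3) ^ (i + 1) * (A j ^ 2 / P (j + 1)) := by
        have := P_le_A j
        gcongr
    _ = A j ^ (4 * i + 6) / P (j + 1) * (1 / A j) := by
        field_simp; ring
    _ ≤ 1 * (1 / A j) := by
        gcongr
        rw [div_le_one hp1]; exact hpow
    _ ≤ (1 / 2) ^ j := by
        rw [one_mul, div_pow, one_pow]
        have := A_ge_two_pow j
        gcongr

lemma phi_smooth : ContDiff ℝ ((⊤ : ℕ∞) : WithTop ℕ∞) (fun x : ℝ => S 1 (x : Torus1)) := by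
  unfold S
  refine contDiff_tsum (v := fun i j => P j ^ i * (2 * A j ^ 2 * Real.pi) ^ (i + 1) * dl j)
    (fun j => ?_) (fun k _ => v_summ k) (fun k j x _ => D_iter j k x)
  simp_rw [D_coe]
  have := gR_smooth (AA j ^ 2) ((⊤ : ℕ∞) : WithTop ℕ∞)
  fun_prop

lemma T_bij : Function.Bijective T :=
  Function.bijective_iff_has_inverse.2 ⟨Tinv, Tinv_T, T_Tinv⟩

lemma T_diffeo : IsCkTorusDiffeo ⊤ T := by
  refine ⟨T_bij, ⟨fun p => (p.1 + alpha, p.2 + betaR + S 1 (p.1 : Torus1)), ?_, ?_⟩,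
    ⟨fun p => (p.1 - alpha, p.2 - betaR - S 1 ((p.1 - alpha : ℝ) : Torus1)), ?_, ?_⟩⟩
  · have h : ContDiff ℝ ((⊤ : ℕ∞) : WithTop ℕ∞) (fun p : ℝ × ℝ => S 1 (p.1 : Torus1)) :=
      phi_smooth.comp contDiff_fst
    fun_prop
  · intro p
    simp [torusProj, T, al, be]
  · have h : ContDiff ℝ ((⊤ : ℕ∞) : WithTop ℕ∞)
        (fun p : ℝ × ℝ => S 1 ((p.1 - alpha : ℝ) : Torus1)) :=
      phi_smooth.comp (contDiff_fst.sub contDiff_const)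
    fun_prop
  · intro p
    have : Function.invFun T = Tinv := by
      ext1 z
      apply T_bij.1
      rw [T_Tinv]
      exact Function.invFun_eq ⟨Tinv z, T_Tinv z⟩
    rw [this]
    simp [torusProj, Tinv, al, be]

end SE
end

open MeasureTheory Filter Set
open scoped Topology ENNReal NNReal
noncomputable section
namespace SE

/-! ### The measurable transfer function and unique ergodicity -/

def PsiE (x : Torus1) : ℝ≥0∞ := ∑' j, ENNReal.ofReal (psi j x)
def Psi (x : Torus1) : ℝ := (PsiE x).toReal
def Good : Set Torus1 := {x | PsiE x ≠ ⊤}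

lemma PsiE_meas : Measurable PsiE := by
  unfold PsiE
  exact Measurable.ennreal_tsum fun j => ENNReal.measurable_ofReal.comp (psi_cont j).measurable

lemma Psi_meas : Measurable Psi := PsiE_meas.ennreal_toReal

lemma Good_meas : MeasurableSet Good := by
  have : Good = PsiE ⁻¹' {⊤}ᶜ := rfl
  rw [this]
  exact PsiE_meas (measurableSet_singleton _).compl

lemma psi_lintegral (j : ℕ) :
    ∫⁻ x : Torus1, ENNReal.ofReal (psi j x) ≤ ENNReal.ofReal ((1 / 2) ^ j) := by
  have h1 : MeasurePreserving (fun x : Torus1 => pp j • x) volume volume :=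
    (AddCircle.ergodic_nsmul (T := (1 : ℝ)) (n := pp j) (by
      have := pp_big j; omega)).toMeasurePreserving
  have hm : Measurable (fun x : Torus1 => ENNReal.ofReal (gC (AA j ^ 2) x)) :=
    ENNReal.measurable_ofReal.comp (gC_cont _).measurable
  calc ∫⁻ x : Torus1, ENNReal.ofReal (psi j x)
      ≤ ∫⁻ x : Torus1, ENNReal.ofReal (gC (AA j ^ 2) (pp j • x)) := by
        apply lintegral_mono
        intro x
        apply ENNReal.ofReal_le_ofReal
        have := gC_nonneg (AA j ^ 2) (pp j • x)
        unfold psi; linarith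
    _ = ∫⁻ x : Torus1, ENNReal.ofReal (gC (AA j ^ 2) x) := h1.lintegral_comp hm
    _ ≤ ENNReal.ofReal (1 / AA j) := gC_lintegral _ (AA_pos j)
    _ ≤ _ := by
        apply ENNReal.ofReal_le_ofReal
        rw [div_pow, one_pow]
        have := A_ge_two_pow j
        unfold A at this
        gcongr

lemma Good_ae : volume Goodᶜ = 0 := by
  have h1 : ∫⁻ x : Torus1, PsiE x ≠ ⊤ := by
    unfold PsiE
    rw [lintegral_tsum (f := fun j x => ENNReal.ofReal (psi j x)) fun j =>
      (ENNReal.measurable_ofReal.comp (psi_cont j).measurable).aemeasurable]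
    have hs : Summable (fun j : ℕ => (1 / 2 : ℝ) ^ j) :=
      summable_geometric_of_lt_one (by norm_num) (by norm_num)
    refine ne_top_of_le_ne_top ?_ (ENNReal.tsum_le_tsum psi_lintegral)
    rw [← ENNReal.ofReal_tsum_of_nonneg (fun j => by positivity) hs]
    exact ENNReal.ofReal_ne_top
  have h2 := ae_lt_top PsiE_meas h1
  have h3 : ∀ᵐ x : Torus1, x ∈ Good := by
    filter_upwards [h2] with x hx using hx.ne
  exact h3

lemma good_iff (x : Torus1) : x ∈ Good ↔ Summable (fun j => psi j x) := by
  constructor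
  · intro h
    have h2 := ENNReal.summable_toReal h
    refine h2.congr fun j => ?_
    exact ENNReal.toReal_ofReal (psi_nonneg j x)
  · intro h
    change PsiE x ≠ ⊤
    unfold PsiE
    rw [← ENNReal.ofReal_tsum_of_nonneg (fun j => psi_nonneg j x) h]
    exact ENNReal.ofReal_ne_top

lemma Psi_eq (x : Torus1) : Psi x = ∑' j, psi j x := by
  unfold Psi PsiE
  rw [ENNReal.tsum_toReal_eq fun j => ENNReal.ofReal_ne_top]
  congr 1; ext j
  exact ENNReal.toReal_ofReal (psi_nonneg j x)

lemma good_shift (n : ℕ) (x : Torus1) (hx : x ∈ Good) : x + n • al ∈ Good := by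
  rw [good_iff] at *
  refine (hx.add (summ_D n x)).congr fun j => ?_
  unfold D; ring

lemma S_eq (n : ℕ) (x : Torus1) (hx : x ∈ Good) : S n x = Psi (x + n • al) - Psi x := by
  have h2 := good_shift n x hx
  rw [Psi_eq, Psi_eq, ← ((good_iff _).1 h2).tsum_sub ((good_iff _).1 hx)]
  rfl

def H (z : Torus2) : Torus2 := (z.1, z.2 - ((Psi z.1 : ℝ) : Torus1))
def Hi (z : Torus2) : Torus2 := (z.1, z.2 + ((Psi z.1 : ℝ) : Torus1))
def rho : Torus2 := (al, be)

lemma PsiC_meas : Measurable (fun z : Torus2 => ((Psi z.1 : ℝ) : Torus1)) :=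
  coe_cont.measurable.comp (Psi_meas.comp measurable_fst)

lemma H_meas : Measurable H := measurable_fst.prodMk (measurable_snd.sub PsiC_meas)
lemma Hi_meas : Measurable Hi := measurable_fst.prodMk (measurable_snd.add PsiC_meas)
lemma H_Hi (z : Torus2) : H (Hi z) = z := by simp [H, Hi]
lemma Hi_H (z : Torus2) : Hi (H z) = z := by simp [H, Hi]

lemma H_iter (n : ℕ) (z : Torus2) (hz : z.1 ∈ Good) : H (T^[n] z) = H z + n • rho := by
  rw [T_iter]
  simp only [H, rho]
  rw [S_eq n z.1 hz, AddCircle.coe_sub]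
  ext
  · simp
  · simp only [Prod.snd_add, Prod.smul_snd]; abel

lemma T_vol : MeasurePreserving T volume volume := by
  have h := (measurePreserving_add_right (volume : Measure Torus1) al).skew_product
    (μc := (volume : Measure Torus1)) (μd := (volume : Measure Torus1))
    (g := fun x y => y + be + ((S 1 x : ℝ) : Torus1)) (by
      have h : Continuous (fun z : Torus2 => ((S 1 z.1 : ℝ) : Torus1)) :=
        coe_cont.comp ((S_cont 1).comp continuous_fst)
      have : Continuous (fun z : Torus2 => z.2 + be + ((S 1 z.1 : ℝ) : Torus1)) := by fun_prop
      exact this.measurable) (by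
      refine Eventually.of_forall fun x => ?_
      simp_rw [add_assoc]
      exact (measurePreserving_add_right (volume : Measure Torus1) _).map_eq)
  exact h

lemma T_meas : Measurable T := T_cont.measurable

lemma map_H (μ : Measure Torus2) [IsProbabilityMeasure μ] (h : MeasurePreserving T μ μ) :
    Measure.map H μ = volume := by
  have hf : IsProbabilityMeasure (Measure.map Prod.fst μ) :=
    Measure.isProbabilityMeasure_map measurable_fst.aemeasurable
  have h1 : Measure.map Prod.fst μ = (volume : Measure Torus1) := by
    apply rot_unique1 indep
    refine ⟨measurable_add_const _, ?_⟩
    rw [Measure.map_map (measurable_add_const _) measurable_fst]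
    conv_rhs => rw [← h.map_eq, Measure.map_map measurable_fst T_meas]
    rfl
  have h2 : ∀ᵐ z ∂μ, z.1 ∈ Good := by
    have : μ (Prod.fst ⁻¹' Goodᶜ) = 0 := by
      rw [← Measure.map_apply measurable_fst Good_meas.compl, h1, Good_ae]
    exact this
  have hH : IsProbabilityMeasure (Measure.map H μ) :=
    Measure.isProbabilityMeasure_map H_meas.aemeasurable
  refine rot_unique indep _ _ ⟨measurable_add_const _, ?_⟩ (vol_rot _)
  rw [Measure.map_map (measurable_add_const _) H_meas]
  conv_rhs => rw [← h.map_eq, Measure.map_map H_meas T_meas]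
  apply Measure.map_congr
  filter_upwards [h2] with z hz
  have := H_iter 1 z hz
  simp only [Function.iterate_one, one_smul] at this
  exact this.symm

lemma T_ue : UniquelyErgodicWithVolume T := by
  refine ⟨T_vol, fun μ hμ h => ?_⟩
  have h1 := map_H μ h
  have h2 := map_H volume T_vol
  have h3 := congrArg (Measure.map Hi) (h1.trans h2.symm)
  rw [Measure.map_map Hi_meas H_meas, Measure.map_map Hi_meas H_meas] at h3
  have : Hi ∘ H = id := funext Hi_H
  rw [this, Measure.map_id, Measure.map_id] at h3
  exact h3

lemma H_mp : MeasurePreserving H volume volume := ⟨H_meas, map_H volume T_vol⟩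

end SE
end

open MeasureTheory Filter Set
open scoped Topology ENNReal NNReal
noncomputable section
namespace SE

/-! ### Vanishing of the measure-theoretic slow entropy -/

def EE (Q : FinMeasPartition Torus2) : Set (Torus2 × Torus2) :=
  {p | ¬ ∃ i, Hi p.1 ∈ Q.piece i ∧ Hi p.2 ∈ Q.piece i}

lemma EE_meas (Q : FinMeasPartition Torus2) : MeasurableSet (EE Q) := by
  have : EE Q = (⋃ i, ((fun p : Torus2 × Torus2 => Hi p.1) ⁻¹' Q.piece i ∩
      (fun p : Torus2 × Torus2 => Hi p.2) ⁻¹' Q.piece i))ᶜ := by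
    ext p; simp [EE]
  rw [this]
  refine (MeasurableSet.iUnion fun i => ?_).compl
  exact ((Hi_meas.comp measurable_fst) (Q.measurable i)).inter
    ((Hi_meas.comp measurable_snd) (Q.measurable i))

lemma EE_small (Q : FinMeasPartition Torus2) :
    Tendsto (fun h : Torus2 => volume {z : Torus2 | (z, z + h) ∈ EE Q}) (𝓝 0) (𝓝 0) := by
  let B : Fin Q.card → Set Torus2 := fun i => Hi ⁻¹' Q.piece i
  let f : Torus2 → C(Torus2, Torus2) := fun h => ⟨fun z => z + h, continuous_add_const h⟩
  have hf : Continuous f := by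
    apply ContinuousMap.continuous_of_continuous_uncurry
    exact continuous_snd.add continuous_fst
  have h1 : ∀ i, Tendsto (fun h => volume (symmDiff (f h ⁻¹' B i) (f 0 ⁻¹' B i))) (𝓝 0) (𝓝 0) := by
    intro i
    refine tendsto_measure_symmDiff_preimage_nhds_zero (μ := volume) (ν := volume)
      (hf.tendsto 0) (Eventually.of_forall fun h => vol_rot h) (vol_rot 0)
      (Hi_meas (Q.measurable i)).nullMeasurableSet (measure_ne_top _ _)
  have h2 := tendsto_finsetSum (Finset.univ : Finset (Fin Q.card)) (fun i _ => h1 i)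
  simp only [Finset.sum_const_zero] at h2
  refine tendsto_of_tendsto_of_tendsto_of_le_of_le tendsto_const_nhds h2 (fun _ => zero_le) ?_
  intro h
  refine (measure_mono ?_).trans (measure_iUnion_fintype_le volume
    (fun i => symmDiff (f h ⁻¹' B i) (f 0 ⁻¹' B i)))
  intro z hz
  have hc : Hi z ∈ ⋃ i, Q.piece i := by rw [Q.cover]; trivial
  obtain ⟨i, hi⟩ := mem_iUnion.1 hc
  refine mem_iUnion.2 ⟨i, Or.inr ⟨?_, ?_⟩⟩
  · change Hi (z + 0) ∈ Q.piece i
    rwa [add_zero]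
  · intro h3
    exact hz ⟨i, hi, h3⟩

def cnt (Q : FinMeasPartition Torus2) (n : ℕ) (p : Torus2 × Torus2) : ℝ≥0∞ :=
  ∑ k ∈ Finset.range n, (EE Q).indicator 1 (p.1 + k • rho, p.2 + k • rho)

lemma cnt_meas (Q : FinMeasPartition Torus2) (n : ℕ) : Measurable (cnt Q n) := by
  unfold cnt
  refine Finset.measurable_sum _ fun k _ => ?_
  refine (measurable_one.indicator (EE_meas Q)).comp ?_
  exact (measurable_fst.add_const _).prodMk (measurable_snd.add_const _)

lemma cnt_int (Q : FinMeasPartition Torus2) (n : ℕ) (g w : Torus2) :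
    ∫⁻ u : Torus2, cnt Q n (u + g, u + w)
      = n * volume {z : Torus2 | (z, z + (w - g)) ∈ EE Q} := by
  unfold cnt
  have hm : ∀ h : Torus2, MeasurableSet {z : Torus2 | (z, z + h) ∈ EE Q} := fun h =>
    (measurable_id.prodMk (measurable_add_const h)) (EE_meas Q)
  rw [lintegral_finsetSum]
  · have : ∀ k ∈ Finset.range n, ∫⁻ u : Torus2,
        (EE Q).indicator (1 : Torus2 × Torus2 → ℝ≥0∞) (u + g + k • rho, u + w + k • rho)
        = volume {z : Torus2 | (z, z + (w - g)) ∈ EE Q} := by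
      intro k _
      rw [← lintegral_indicator_one (hm (w - g)),
        ← (vol_rot (g + k • rho)).lintegral_comp (measurable_one.indicator (hm _))]
      congr 1; ext u
      have e1 : u + g + k • rho = u + (g + k • rho) := by abel
      have e2 : u + w + k • rho = u + (g + k • rho) + (w - g) := by abel
      rw [e1, e2]
      simp only [indicator]
      rfl
    rw [Finset.sum_congr rfl this]
    simp
  · intro k _
    refine (measurable_one.indicator (EE_meas Q)).comp ?_
    exact ((measurable_add_const _).add_const _).prodMk ((measurable_add_const _).add_const _)

lemma code_le (Q : FinMeasPartition Torus2) (n : ℕ) (hn : 0 < n) (ε : ℝ) (x y : Torus2)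
    (hx : x.1 ∈ Good) (hy : y.1 ∈ Good) (h : ¬ codeHammingDist T Q n x y < ε) :
    ENNReal.ofReal ε * n ≤ cnt Q n (H x, H y) := by
  classical
  have hn' : (0 : ℝ) < n := by exact_mod_cast hn
  unfold codeHammingDist at h
  rw [not_lt, le_div_iff₀ hn'] at h
  have hc : cnt Q n (H x, H y) = (((Finset.range n).filter fun k =>
      ¬ ∃ i, T^[k] x ∈ Q.piece i ∧ T^[k] y ∈ Q.piece i).card : ℝ≥0∞) := by
    unfold cnt
    rw [Finset.card_filter]
    push_cast
    refine Finset.sum_congr rfl fun k _ => ?_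
    rw [← H_iter k x hx, ← H_iter k y hy]
    simp only [indicator, EE, mem_ofPred_eq, Hi_H, Pi.one_apply]
  rw [hc]
  have h2 := ENNReal.ofReal_le_ofReal h
  rw [ENNReal.ofReal_mul' hn'.le, ENNReal.ofReal_natCast, ENNReal.ofReal_natCast] at h2
  convert h2

lemma net (δ : ℝ) (hδ : 0 < δ) : ∃ G : Finset Torus2, ∀ w : Torus2, ∃ g ∈ G, dist w g < δ := by
  obtain ⟨t, -, ht, hc⟩ := (isCompact_univ (X := Torus2)).finite_cover_balls hδ
  refine ⟨ht.toFinset, fun w => ?_⟩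
  obtain ⟨g, hg, hw⟩ := mem_iUnion₂.1 (hc (mem_univ w))
  exact ⟨g, by simpa using hg, hw⟩

lemma hamming_bdd (Q : FinMeasPartition Torus2) (ε : ℝ) (hε : 0 < ε) :
    ∃ C : ℕ, ∀ n : ℕ, 0 < n → hammingCoverNum volume T Q n ε ≤ C := by
  set m : ℝ := min ε 1 / 2 with hm
  have hm0 : 0 < m := by positivity
  have hm1 : m < 1 := by have := min_le_right ε 1; linarith
  have hmε : m < ε := by have := min_le_left ε 1; linarith
  set c : ℝ≥0∞ := ENNReal.ofReal ε * ENNReal.ofReal m with hcdef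
  have hε' : ENNReal.ofReal ε ≠ 0 := (ENNReal.ofReal_pos.2 hε).ne'
  have hc0 : 0 < c := ENNReal.mul_pos hε' (ENNReal.ofReal_pos.2 hm0).ne'
  have h1 := (ENNReal.tendsto_nhds_zero.1 (EE_small Q)) c hc0
  obtain ⟨δ, hδ, hball⟩ := Metric.eventually_nhds_iff.1 h1
  obtain ⟨G, hG⟩ := net δ hδ
  refine ⟨G.card, fun n hn => ?_⟩
  have hn0 : (n : ℝ≥0∞) ≠ 0 := by exact_mod_cast hn.ne'
  have hnT : (n : ℝ≥0∞) ≠ ⊤ := ENNReal.natCast_ne_top n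
  set thr : ℝ≥0∞ := ENNReal.ofReal ε * n with hthr
  let M : Set (Torus2 × Torus2) := ⋂ g ∈ G, {p | thr ≤ cnt Q n (p.1 + g, p.1 + p.2)}
  have hM : MeasurableSet M := by
    refine Finset.measurableSet_biInter G fun g _ => ?_
    refine measurableSet_le measurable_const ((cnt_meas Q n).comp ?_)
    exact (measurable_fst.add_const _).prodMk (measurable_fst.add measurable_snd)
  have hMv : (volume : Measure Torus2).prod (volume : Measure Torus2) M ≤ ENNReal.ofReal m := by
    rw [Measure.prod_apply_symm hM]
    calc _ ≤ ∫⁻ w : Torus2, ENNReal.ofReal m := by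
          apply lintegral_mono
          intro w
          obtain ⟨g, hg, hw⟩ := hG w
          have hsub : (fun u : Torus2 => (u, w)) ⁻¹' M ⊆ {u | thr ≤ cnt Q n (u + g, u + w)} := by
            intro u hu
            exact mem_iInter₂.1 hu g hg
          have hE := hball (y := w - g) (by rwa [dist_zero_right, ← dist_eq_norm])
          have hmk := mul_meas_ge_le_lintegral (μ := (volume : Measure Torus2))
            (f := fun u : Torus2 => cnt Q n (u + g, u + w))
            ((cnt_meas Q n).comp ((measurable_add_const _).prodMk (measurable_add_const _))) thr
          rw [cnt_int] at hmk
          have h3 : thr * volume {u : Torus2 | thr ≤ cnt Q n (u + g, u + w)}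
              ≤ thr * ENNReal.ofReal m := by
            refine hmk.trans ?_
            calc (n : ℝ≥0∞) * volume {z : Torus2 | (z, z + (w - g)) ∈ EE Q} ≤ n * c := by gcongr
              _ = _ := by rw [hthr, hcdef]; ring
          have ht0 : thr ≠ 0 := mul_ne_zero hε' hn0
          have htT : thr ≠ ⊤ := ENNReal.mul_ne_top ENNReal.ofReal_ne_top hnT
          have h4 := (ENNReal.mul_le_mul_iff_right ht0 htT).1 h3
          exact (measure_mono hsub).trans h4
      _ = _ := by simp
  rw [Measure.prod_apply hM] at hMv
  let N : Set Torus2 := ⋃ g ∈ G, (fun u : Torus2 => u + g) ⁻¹' (Prod.fst ⁻¹' Goodᶜ)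
  have hgood : volume (Prod.fst ⁻¹' Goodᶜ : Set Torus2) = 0 := by
    have h : MeasurePreserving (Prod.fst : Torus2 → Torus1) volume volume :=
      measurePreserving_fst
    rw [h.measure_preimage Good_meas.compl.nullMeasurableSet, Good_ae]
  have hgm : MeasurableSet (Prod.fst ⁻¹' Goodᶜ : Set Torus2) := measurable_fst Good_meas.compl
  have hN : volume N = 0 := by
    refine (measure_biUnion_null_iff G.countable_toSet).2 fun g _ => ?_
    rw [(vol_rot g).measure_preimage hgm.nullMeasurableSet, hgood]
  obtain ⟨u, huN, hu⟩ := exists_notMem_null_le_lintegral (μ := (volume : Measure Torus2))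
    (f := fun u => volume (Prod.mk u ⁻¹' M)) (measurable_measure_prodMk_left hM).aemeasurable hN
  replace hu := hu.trans hMv
  have hug : ∀ g ∈ G, (u + g).1 ∈ Good := by
    intro g hg
    by_contra hcon
    exact huN (mem_iUnion₂.2 ⟨g, hg, hcon⟩)
  classical
  let F : Finset Torus2 := G.image fun g => Hi (u + g)
  set U : Set Torus2 := ⋃ x ∈ F, {y | codeHammingDist T Q n x y < ε} with hU
  have hMu : MeasurableSet (Prod.mk u ⁻¹' M) := measurable_prodMk_left hM
  have hUc : volume Uᶜ ≤ ENNReal.ofReal m := by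
    have hsub : Uᶜ ⊆ (Prod.fst ⁻¹' Goodᶜ) ∪
        H ⁻¹' ((fun z => z + (-u)) ⁻¹' (Prod.mk u ⁻¹' M)) := by
      intro y hy
      by_cases hyg : y.1 ∈ Good
      · right
        change (u, H y + -u) ∈ M
        refine mem_iInter₂.2 fun g hg => ?_
        change thr ≤ cnt Q n (u + g, u + (H y + -u))
        have e : u + (H y + -u) = H y := by abel
        rw [e]
        have hnot : ¬ codeHammingDist T Q n (Hi (u + g)) y < ε := by
          intro hcon
          exact hy (mem_iUnion₂.2 ⟨Hi (u + g), Finset.mem_image_of_mem _ hg, hcon⟩)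
        have := code_le Q n hn ε (Hi (u + g)) y (hug g hg) hyg hnot
        rwa [H_Hi] at this
      · left; exact hyg
    refine (measure_mono hsub).trans ((measure_union_le _ _).trans ?_)
    rw [hgood, zero_add, H_mp.measure_preimage
      ((measurable_add_const _) hMu).nullMeasurableSet,
      (vol_rot (-u)).measure_preimage hMu.nullMeasurableSet]
    exact hu
  have hUm : ENNReal.ofReal (1 - ε) < volume U := by
    have h5 : (1 : ℝ≥0∞) ≤ volume U + ENNReal.ofReal m := by
      calc (1 : ℝ≥0∞) = volume (U ∪ Uᶜ) := by rw [union_compl_self, measure_univ]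
        _ ≤ volume U + volume Uᶜ := measure_union_le _ _
        _ ≤ _ := by gcongr
    have h6 : ENNReal.ofReal (1 - m) ≤ volume U := by
      rw [ENNReal.ofReal_sub _ hm0.le, ENNReal.ofReal_one]
      exact tsub_le_iff_right.2 h5
    refine lt_of_lt_of_le ?_ h6
    exact (ENNReal.ofReal_lt_ofReal_iff (by linarith)).2 (by linarith)
  calc hammingCoverNum volume T Q n ε ≤ F.card := Nat.sInf_le ⟨F, rfl, hUm⟩
    _ ≤ G.card := Finset.card_image_le

lemma limsup_zero (f : ℕ → ℕ) (a : ℕ → ℝ) (ha : ∀ᶠ n in atTop, 0 < a n)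
    (h : Tendsto (fun n => (f n : ℝ) / a n) atTop (𝓝 0)) :
    atTop.limsup (fun n => (f n : ℝ≥0∞) / ENNReal.ofReal (a n)) = 0 := by
  have h1 := ENNReal.tendsto_ofReal h
  rw [ENNReal.ofReal_zero] at h1
  refine Tendsto.limsup_eq (h1.congr' ?_)
  filter_upwards [ha] with n hn
  rw [ENNReal.ofReal_div_of_pos hn, ENNReal.ofReal_natCast]

lemma meas_fun_zero (Q : FinMeasPartition Torus2) (ε : ℝ) (hε : 0 < ε) :
    measSlowEntFun volume T (intScale1 5 2) Q ε = 0 := by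
  unfold measSlowEntFun
  have : {t : ℝ | 0 < t ∧ 0 < Filter.atTop.limsup fun n =>
      (hammingCoverNum volume T Q n ε : ℝ≥0∞) / ENNReal.ofReal (intScale1 5 2 n t)} = ∅ := by
    rw [eq_empty_iff_forall_notMem]
    rintro t ⟨ht, hl⟩
    have hs := scale_tendsto t ht
    obtain ⟨C, hC⟩ := hamming_bdd Q ε hε
    rw [limsup_zero _ _ (hs.eventually_gt_atTop 0)] at hl
    · exact lt_irrefl _ hl
    · refine squeeze_zero' (g := fun n => (C : ℝ) / intScale1 5 2 n t) ?_ ?_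
        (hs.const_div_atTop _)
      · filter_upwards [hs.eventually_gt_atTop 0] with n hn
        positivity
      · filter_upwards [hs.eventually_gt_atTop 0, eventually_gt_atTop 0] with n hn hn0
        have : (hammingCoverNum volume T Q n ε : ℝ) ≤ C := by exact_mod_cast hC n hn0
        gcongr
  rw [this, Real.sSup_empty]

lemma T_meas_ent : HasUpperMeasSlowEntropy (volume : Measure Torus2) T (intScale1 5 2) 0 := by
  have h : ∀ Q : FinMeasPartition Torus2,
      Tendsto (measSlowEntFun volume T (intScale1 5 2) Q) (𝓝[>] (0 : ℝ)) (𝓝 0) := by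
    intro Q
    refine tendsto_const_nhds.congr' ?_
    filter_upwards [self_mem_nhdsWithin] with ε hε
    exact (meas_fun_zero Q ε hε).symm
  refine ⟨fun Q => ⟨0, h Q⟩, ?_⟩
  have : {e : ℝ | ∃ Q : FinMeasPartition Torus2,
      Tendsto (measSlowEntFun volume T (intScale1 5 2) Q) (𝓝[>] (0 : ℝ)) (𝓝 e)} = {0} := by
    ext e
    constructor
    · rintro ⟨Q, hQ⟩
      exact tendsto_nhds_unique hQ (h Q)
    · rintro rfl
      exact ⟨⟨1, fun _ => Set.univ, fun _ => MeasurableSet.univ,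
        fun i j hij => (hij (Subsingleton.elim i j)).elim, Set.iUnion_const _⟩, h _⟩
  rw [this]
  exact isLUB_singleton

end SE
end

open MeasureTheory Filter Set
open scoped Topology ENNReal NNReal
noncomputable section
namespace SE

/-! ### Topological slow entropy -/

lemma bowen_lt (n : ℕ) (ε : ℝ) (hε : 0 < ε) (x y : Torus2)
    (h : ∀ i < n, dist (T^[i] x) (T^[i] y) < ε) : bowenDist T n x y < ε := by
  unfold bowenDist
  lift ε to ℝ≥0 using hε.le
  rw [NNReal.coe_lt_coe, Finset.sup_lt_iff (by exact_mod_cast hε)]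
  intro i hi
  have := h i (Finset.mem_range.1 hi)
  rw [dist_nndist] at this
  exact_mod_cast this

lemma le_bowen (n i : ℕ) (hi : i < n) (x y : Torus2) :
    dist (T^[i] x) (T^[i] y) ≤ bowenDist T n x y := by
  unfold bowenDist
  rw [dist_nndist]
  exact_mod_cast Finset.le_sup (f := fun i => nndist (T^[i] x) (T^[i] y)) (Finset.mem_range.2 hi)

def grid (K : ℕ) : Finset Torus1 := by
  classical
  exact (Finset.range K).image fun k : ℕ => (((k : ℝ) / K : ℝ) : Torus1)

lemma grid_card (K : ℕ) : (grid K).card ≤ K := by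
  classical
  unfold grid
  exact Finset.card_image_le.trans (Finset.card_range K).le

lemma grid_near (K : ℕ) (hK : 0 < K) (x : Torus1) : ∃ g ∈ grid K, ‖g - x‖ ≤ 1 / K := by
  classical
  have hK' : (0 : ℝ) < K := by exact_mod_cast hK
  obtain ⟨r0, hr0, -⟩ := exists_rep x
  set r := Int.fract r0
  have hr : (r : Torus1) = x := by
    rw [← hr0]
    have : r0 = r + ⌊r0⌋ := (Int.fract_add_floor r0).symm
    rw [this, AddCircle.coe_add]
    have h0 : ((⌊r0⌋ : ℝ) : Torus1) = 0 := by
      rw [AddCircle.coe_eq_zero_iff]; exact ⟨⌊r0⌋, by simp⟩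
    rw [h0, add_zero]
  have h0 : 0 ≤ r := Int.fract_nonneg r0
  have h1 : r < 1 := Int.fract_lt_one r0
  have hf := Nat.floor_le (mul_nonneg h0 hK'.le)
  have hf2 := Nat.lt_floor_add_one (r * K)
  refine ⟨(((⌊r * K⌋₊ : ℝ) / K : ℝ) : Torus1), ?_, ?_⟩
  · unfold grid
    refine Finset.mem_image.2 ⟨⌊r * K⌋₊, ?_, rfl⟩
    rw [Finset.mem_range, Nat.floor_lt (mul_nonneg h0 hK'.le)]
    nlinarith
  · rw [← hr, ← AddCircle.coe_sub]
    refine (norm_coe_le _).trans ?_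
    rw [abs_le]
    have e : (⌊r * K⌋₊ : ℝ) / K - r = (⌊r * K⌋₊ - r * K) / K := by field_simp
    rw [e, ← neg_div]
    constructor
    · gcongr; linarith
    · gcongr; linarith

lemma dist_iter (i : ℕ) (z w : Torus2) : dist (T^[i] z) (T^[i] w) =
    max ‖z.1 - w.1‖ ‖z.2 - w.2 + ((S i z.1 - S i w.1 : ℝ) : Torus1)‖ := by
  rw [T_iter, T_iter, Prod.dist_eq, dist_eq_norm, dist_eq_norm]
  congr 2
  · simp only; abel
  · simp only [AddCircle.coe_sub]; abel

lemma LL_ge (j : ℕ) : 1000000 ≤ LL j := (A_ge'' j).trans (A_le_LL j)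
lemma LL_two (j : ℕ) : (2 : ℝ) ^ j ≤ LL j := (A_ge_two_pow j).trans (A_le_LL j)

lemma cover (ε : ℝ) (hε : 0 < ε) : ∃ C : ℝ, 0 < C ∧ ∃ J1 : ℕ, ∀ J ≥ J1, ∀ n : ℕ,
    (n : ℝ) ≤ P (J + 2) / LL (J + 1) ^ 2 → ∃ F : Finset Torus2, (F.card : ℝ) ≤ C * LL J ∧
      ∀ y, ∃ x ∈ F, bowenDist T n x y < ε := by
  obtain ⟨J1, hJ1⟩ := pow_unbounded_of_one_lt (104 / ε) (by norm_num : (1 : ℝ) < 2)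
  refine ⟨(40 / ε + 1) * (4 / ε + 1), by positivity, J1, fun J hJ n hn => ?_⟩
  set K := ⌈40 * LL J / ε⌉₊ with hK
  set K2 := ⌈4 / ε⌉₊ with hK2
  have hL := LL_pos J
  have hL1 := LL_pos (J + 1)
  have hLg := LL_ge J
  have hK0 : 0 < K := Nat.ceil_pos.2 (by positivity)
  have hK20 : 0 < K2 := Nat.ceil_pos.2 (by positivity)
  have hK0' : (0 : ℝ) < K := by exact_mod_cast hK0
  have hK20' : (0 : ℝ) < K2 := by exact_mod_cast hK20
  have hKle : 40 * LL J / ε ≤ K := Nat.le_ceil _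
  have hK2le : 4 / ε ≤ K2 := Nat.le_ceil _
  have hKlt : (K : ℝ) < 40 * LL J / ε + 1 := Nat.ceil_lt_add_one (by positivity)
  have hK2lt : (K2 : ℝ) < 4 / ε + 1 := Nat.ceil_lt_add_one (by positivity)
  refine ⟨grid K ×ˢ grid K2, ?_, ?_⟩
  · rw [Finset.card_product]
    push_cast
    have h1 : ((grid K).card : ℝ) ≤ K := by exact_mod_cast grid_card K
    have h2 : ((grid K2).card : ℝ) ≤ K2 := by exact_mod_cast grid_card K2
    have h3 : (K : ℝ) ≤ (40 / ε + 1) * LL J := by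
      have : 40 * LL J / ε = 40 / ε * LL J := by ring
      nlinarith
    calc ((grid K).card : ℝ) * (grid K2).card ≤ ((40 / ε + 1) * LL J) * (4 / ε + 1) := by
          have := h1.trans h3
          have := h2.trans hK2lt.le
          gcongr
      _ = _ := by ring
  · intro y
    obtain ⟨g1, hg1, hn1⟩ := grid_near K hK0 y.1
    obtain ⟨g2, hg2, hn2⟩ := grid_near K2 hK20 y.2
    refine ⟨(g1, g2), Finset.mem_product.2 ⟨hg1, hg2⟩, bowen_lt n ε hε _ _ fun i hi => ?_⟩
    rw [dist_iter]
    have hpi := Real.pi_pos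
    have hpi2 := Real.pi_lt_d2
    have b1 : 1 / (K : ℝ) ≤ ε / (40 * LL J) := by
      rw [div_le_div_iff₀ hK0' (by positivity)]
      rw [div_le_iff₀ hε] at hKle
      linarith
    have b2 : 1 / (K2 : ℝ) ≤ ε / 4 := by
      rw [div_le_div_iff₀ hK20' (by positivity)]
      rw [div_le_iff₀ hε] at hK2le
      linarith
    have b3 : LL J * ‖g1 - y.1‖ ≤ ε / 40 := by
      calc _ ≤ LL J * (ε / (40 * LL J)) := by
            have := hn1.trans b1
            gcongr
        _ = _ := by field_simp
    have b4 : ‖g1 - y.1‖ ≤ ε / 40 := by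
      have := norm_nonneg (g1 - y.1)
      nlinarith
    have b5 : (i : ℝ) * tau (J + 1) ≤ ε / 104 := by
      have hin : (i : ℝ) ≤ P (J + 2) / LL (J + 1) ^ 2 := by
        have : (i : ℝ) ≤ n := by exact_mod_cast hi.le
        exact this.trans hn
      have ht := tau_pos (J + 1)
      have hP2 := P_pos (J + 2)
      calc (i : ℝ) * tau (J + 1) ≤ P (J + 2) / LL (J + 1) ^ 2 * tau (J + 1) := by gcongr
        _ = 1 / LL (J + 1) := by
            unfold tau
            rw [show J + 1 + 1 = J + 2 from rfl]
            field_simp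
        _ ≤ ε / 104 := by
            rw [div_le_div_iff₀ hL1 (by norm_num)]
            have h5 : (2 : ℝ) ^ J1 ≤ 2 ^ (J + 1) := pow_le_pow_right₀ (by norm_num) (by omega)
            have h6 := LL_two (J + 1)
            rw [div_lt_iff₀ hε] at hJ1
            nlinarith
    have hS := S_lip i (J + 1) g1 y.1
    have hs2 := sumL2 J
    have c1 : 2 * Real.pi * (∑ j ∈ Finset.range (J + 1), LL j) * ‖g1 - y.1‖
        ≤ 13 * (ε / 40) := by
      calc _ ≤ 2 * Real.pi * (2 * LL J) * ‖g1 - y.1‖ := by gcongr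
        _ = (4 * Real.pi) * (LL J * ‖g1 - y.1‖) := by ring
        _ ≤ 13 * (ε / 40) := by
          have : 0 ≤ LL J * ‖g1 - y.1‖ := by positivity
          gcongr; linarith
    have c2 : 8 * Real.pi * i * tau (J + 1) ≤ 26 * (ε / 104) := by
      calc _ = (8 * Real.pi) * (i * tau (J + 1)) := by ring
        _ ≤ _ := by
          have := tau_pos (J + 1)
          have : 0 ≤ i * tau (J + 1) := by positivity
          gcongr; linarith
    have c3 : ‖g2 - y.2 + ((S i g1 - S i y.1 : ℝ) : Torus1)‖
        ≤ ‖g2 - y.2‖ + |S i g1 - S i y.1| :=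
      (norm_add_le _ _).trans (by gcongr; exact norm_coe_le _)
    apply max_lt
    · simp only; linarith
    · simp only; linarith

def thr (J : ℕ) : ℝ := P (J + 1) / LL J ^ 2

lemma LL6 (J : ℕ) : LL J ^ 6 ≤ P (J + 1) := by
  have := tau_le J
  unfold tau at this
  rw [div_mul_eq_mul_div, div_le_one (P_pos _)] at this
  calc _ = LL J * LL J ^ 5 := by ring
    _ ≤ _ := this

lemma thr_ge (J : ℕ) : LL J ^ 4 ≤ thr J := by
  have := LL6 J
  have hL := LL_pos J
  unfold thr
  rw [le_div_iff₀ (by positivity)]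
  calc _ = LL J ^ 6 := by ring
    _ ≤ _ := this

lemma LL_le_thr (J : ℕ) : LL J ≤ thr J := by
  refine le_trans ?_ (thr_ge J)
  exact le_self_pow₀ (by linarith [LL_ge J]) (by norm_num)

lemma exists_J (J2 n : ℕ) (h : thr J2 ≤ n) :
    ∃ J ≥ J2, thr J ≤ n ∧ (n : ℝ) < thr (J + 1) := by
  classical
  have hex : ∃ J, J ≥ J2 ∧ (n : ℝ) < thr (J + 1) := by
    obtain ⟨k, hk⟩ := pow_unbounded_of_one_lt (n : ℝ) (by norm_num : (1 : ℝ) < 2)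
    refine ⟨max k J2, le_max_right _ _, ?_⟩
    calc (n : ℝ) < 2 ^ k := hk
      _ ≤ 2 ^ (max k J2 + 1) := pow_le_pow_right₀ (by norm_num) (by omega)
      _ ≤ LL (max k J2 + 1) := LL_two _
      _ ≤ _ := LL_le_thr _
  have hs := Nat.find_spec hex
  refine ⟨Nat.find hex, hs.1, ?_, hs.2⟩
  rcases eq_or_lt_of_le hs.1 with he | hlt
  · rw [← he]; exact h
  · have hm := Nat.find_min hex (m := Nat.find hex - 1) (by omega)
    by_contra hcon
    apply hm
    refine ⟨by omega, ?_⟩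
    rw [Nat.sub_add_cancel (by omega)]
    linarith

lemma top_upper (ε : ℝ) (hε : 0 < ε) (t : ℝ) (ht : 1 < t) :
    atTop.limsup (fun n => (bowenCoverNum T n ε : ℝ≥0∞) / ENNReal.ofReal (intScale1 5 2 n t)) = 0 := by
  have hs := scale_tendsto t (by linarith)
  have hpos := hs.eventually_gt_atTop 0
  apply limsup_zero _ _ hpos
  obtain ⟨C, hC, J1, hcov⟩ := cover ε hε
  obtain ⟨η, hη, J0, hsc⟩ := scale_lower t ht
  rw [Metric.tendsto_atTop']
  intro e he
  have hAt : Tendsto (fun J => A J ^ η) atTop atTop := by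
    refine (tendsto_rpow_atTop hη).comp ?_
    exact tendsto_atTop_mono A_ge_two_pow (tendsto_pow_atTop_atTop_of_one_lt (by norm_num))
  obtain ⟨J3, hJ3⟩ := eventually_atTop.1 (hAt.eventually_gt_atTop (C / e))
  set J2 := max J3 (max J0 J1)
  refine ⟨⌈thr J2⌉₊, fun n hn => ?_⟩
  have hn' : thr J2 ≤ n := (Nat.le_ceil _).trans (by exact_mod_cast hn.le)
  obtain ⟨J, hJ, h1, h2⟩ := exists_J J2 n hn'
  obtain ⟨F, hF, hFc⟩ := hcov J (by omega) n h2.le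
  have hb : (bowenCoverNum T n ε : ℝ) ≤ C * LL J := by
    refine le_trans ?_ hF
    exact_mod_cast (Nat.sInf_le ⟨F, rfl, hFc⟩ : bowenCoverNum T n ε ≤ F.card)
  have hlow := hsc J (by omega) n h1
  have hA := hJ3 J (by omega)
  have hL := LL_pos J
  have hAp : 0 < A J ^ η := Real.rpow_pos_of_pos (A_pos J) η
  have ha : 0 < intScale1 5 2 n t := lt_of_lt_of_le (by positivity) hlow
  rw [Real.dist_eq, sub_zero, abs_of_nonneg (by positivity), div_lt_iff₀ ha]
  rw [div_lt_iff₀ he] at hA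
  calc (bowenCoverNum T n ε : ℝ) ≤ C * LL J := hb
    _ < (A J ^ η * e) * LL J := by gcongr
    _ = e * (LL J * A J ^ η) := by ring
    _ ≤ _ := by gcongr

end SE
end

open MeasureTheory Filter Set
open scoped Topology ENNReal NNReal
noncomputable section
namespace SE

lemma norm_coe_ge (r c : ℝ) (h1 : c ≤ |r|) (h2 : |r| ≤ 1 - c) : c ≤ ‖(r : Torus1)‖ := by
  rw [AddCircle.norm_eq]
  simp only [inv_one, one_mul, mul_one]
  by_cases h : round r = 0
  · rw [h]; simpa using h1
  · have h3 : (1 : ℝ) ≤ |(round r : ℝ)| := by exact_mod_cast Int.one_le_abs h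
    have h4 := abs_sub_abs_le_abs_sub (round r : ℝ) r
    rw [abs_sub_comm] at h4
    linarith

/-- The separated points. -/
def pt (J a : ℕ) : Torus1 := ((-(a * (4 / A J) / P J) : ℝ) : Torus1)

lemma pp_pt (J a : ℕ) : pp J • pt J a = ((-(a * (4 / A J)) : ℝ) : Torus1) := by
  unfold pt
  rw [← AddCircle.coe_nsmul, nsmul_eq_mul]
  congr 1
  have := P_pos J
  change P J * _ = _
  field_simp

lemma psi_pt (J a i : ℕ) : psi J (pt J a + i • al)
    = gC (AA J ^ 2) ((i * dl J - a * (4 / A J) : ℝ) : Torus1) / 2 := by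
  unfold psi
  rw [smul_add, pp_pt, pp_smul_al, ← AddCircle.coe_add]
  congr 3; ring

lemma psi_pt0 (J a : ℕ) : psi J (pt J a)
    = gC (AA J ^ 2) ((-(a * (4 / A J)) : ℝ) : Torus1) / 2 := by
  unfold psi
  rw [pp_pt]

/-- Off the spike. -/
lemma off (J : ℕ) (r : ℝ) (h1 : 3 / A J ≤ |r|) (h2 : |r| ≤ 1 / 2) :
    gC (AA J ^ 2) (r : Torus1) ≤ 1 / 37 := by
  have hA := A_pos J
  have hA' := A_ge'' J
  have h3 : 3 / A J ≤ 1 / 2 := h1.trans h2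
  have hn := norm_coe_ge r (3 / A J) h1 (by linarith)
  have hd := gC_decay (AA J ^ 2) (r : Torus1)
  have h0 := gC_nonneg (AA J ^ 2) (r : Torus1)
  push_cast at hd
  have h4 : 9 ≤ (AA J : ℝ) ^ 2 * ‖(r : Torus1)‖ ^ 2 := by
    have : 3 ≤ A J * ‖(r : Torus1)‖ := by
      rw [div_le_iff₀ hA] at hn; linarith
    calc (9 : ℝ) = 3 ^ 2 := by norm_num
      _ ≤ (A J * ‖(r : Torus1)‖) ^ 2 := pow_le_pow_left₀ (by norm_num) this 2
      _ = _ := by unfold A; ring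
  nlinarith

/-- On the spike. -/
lemma on (J : ℕ) (r : ℝ) (h : |r| ≤ dl J) : 0.99 ≤ gC (AA J ^ 2) (r : Torus1) := by
  have h1 := gC_lip (AA J) (AA_pos J) (r : Torus1) ((0 : ℝ) : Torus1)
  have h2 : gC (AA J ^ 2) ((0 : ℝ) : Torus1) = 1 := by
    rw [gC_coe]; simp [gR]
  rw [h2, ← AddCircle.coe_sub, sub_zero] at h1
  have h3 : ‖(r : Torus1)‖ ≤ dl J := (norm_coe_le r).trans h
  have h4 := dl_small J
  have hA := A_pos J
  have hd := dl_pos J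
  have h5 : 2 * Real.pi * A J * ‖(r : Torus1)‖ ≤ 0.01 := by
    calc _ ≤ 2 * Real.pi * A J * dl J := by
          have := Real.pi_pos
          gcongr
      _ = 2 * Real.pi * (dl J * A J) := by ring
      _ ≤ 2 * 4 * (1 / 10000) := by
          have := Real.pi_le_four
          gcongr
          linarith
      _ ≤ _ := by norm_num
  have h6 := (abs_le.1 h1).1
  unfold A at h5
  linarith

def tm (J a : ℕ) : ℕ := ⌈a * (4 / A J) / dl J⌉₊

lemma tm_spec (J a : ℕ) : 0 ≤ tm J a * dl J - a * (4 / A J) ∧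
    tm J a * dl J - a * (4 / A J) ≤ dl J := by
  have hd := dl_pos J
  have hA := A_pos J
  have h1 : a * (4 / A J) / dl J ≤ tm J a := Nat.le_ceil _
  have h2 : (tm J a : ℝ) < a * (4 / A J) / dl J + 1 := Nat.ceil_lt_add_one (by positivity)
  rw [div_le_iff₀ hd] at h1
  have h3 : tm J a * dl J ≤ (a * (4 / A J) / dl J + 1) * dl J := by gcongr
  have h4 : (a * (4 / A J) / dl J + 1) * dl J = a * (4 / A J) + dl J := by field_simp
  constructor <;> linarith

lemma tm_lt (J a : ℕ) (ha : (a : ℝ) * (4 / A J) ≤ 1 / 4) : tm J a < pp (J + 1) := by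
  have hd := dl_pos J
  have hA := A_pos J
  have hP := P_pos J
  have hP1 := P_pos (J + 1)
  have h2 : (tm J a : ℝ) < a * (4 / A J) / dl J + 1 := Nat.ceil_lt_add_one (by positivity)
  have h3 := dl_ge J
  have h4 : a * (4 / A J) / dl J ≤ P (J + 1) / 4 := by
    rw [div_le_iff₀ hd]
    have : P (J + 1) / 4 * (P J / P (J + 1)) ≤ P (J + 1) / 4 * dl J := by gcongr
    have h5 : P (J + 1) / 4 * (P J / P (J + 1)) = P J / 4 := by field_simp
    have := P_ge'' J
    linarith
  have := P_ge'' (J + 1)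
  have h6 : (tm J a : ℝ) < P (J + 1) := by linarith
  unfold P at h6
  exact_mod_cast h6

lemma err_aux (s p n : ℝ) (hs0 : 0 ≤ s) (hs' : 100000 * s ≤ p) (hp : 0 < p) (hn0 : 0 ≤ n)
    (hn : n ≤ 1 / p) : 2 * Real.pi * s * n ≤ 8 / 100000 := by
  have hpi := Real.pi_pos
  have hpi2 := Real.pi_le_four
  have hs : s ≤ p / 100000 := by linarith
  have h1 : s * n ≤ (p / 100000) * (1 / p) := by gcongr
  have h2 : (p / 100000) * (1 / p) = 1 / 100000 := by field_simp
  have h3 : 0 ≤ s * n := by positivity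
  nlinarith

set_option maxHeartbeats 1000000 in
lemma sep (J a b : ℕ) (ha0 : 1 ≤ a) (hb0 : 1 ≤ b) (hab : a ≠ b)
    (ha : (a : ℝ) * (4 / A J) ≤ 1 / 4) (hb : (b : ℝ) * (4 / A J) ≤ 1 / 4) :
    1 / 4 ≤ dist (T^[tm J a] (pt J a, 0)) (T^[tm J a] (pt J b, 0)) := by
  have hA := A_pos J
  have hA' := A_ge'' J
  have hd := dl_pos J
  have hP := P_pos J
  set w := 4 / A J with hw
  have hw0 : 0 < w := by positivity
  have hdw : dl J ≤ 1 / A J := by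
    rw [le_div_iff₀ hA]; linarith [dl_small J, mul_pos hd hA]
  have h34 : 3 / A J = 3 * (1 / A J) := by ring
  have hw4 : w = 4 * (1 / A J) := by rw [hw]; ring
  have hAs : 1 / A J ≤ 1 / 1000000 := by gcongr
  have hA0 : 0 < 1 / A J := by positivity
  set i := tm J a with hi
  obtain ⟨t1, t2⟩ := tm_spec J a
  have ha1 : (1 : ℝ) ≤ a := by exact_mod_cast ha0
  have hb1 : (1 : ℝ) ≤ b := by exact_mod_cast hb0
  have haw : w ≤ a * w := by nlinarith
  have hbw : w ≤ b * w := by nlinarith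
  -- main terms
  have m1 : 0.99 / 2 ≤ psi J (pt J a + i • al) := by
    rw [psi_pt]
    have := on J (i * dl J - a * w) (by rw [abs_of_nonneg t1]; exact t2)
    linarith
  have m1' : psi J (pt J a + i • al) ≤ 1 / 2 := by
    rw [psi_pt]
    have := gC_le_one (AA J ^ 2) ((i * dl J - a * w : ℝ) : Torus1)
    linarith
  have offz : ∀ c : ℕ, w ≤ c * w → (c : ℝ) * w ≤ 1 / 4 → psi J (pt J c) ≤ 1 / 74 := by
    intro c h1 h2
    rw [psi_pt0]
    have := off J (-(c * w)) (by rw [abs_neg, abs_of_nonneg (by linarith)]; linarith)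
      (by rw [abs_neg, abs_of_nonneg (by linarith)]; linarith)
    linarith
  have m2 := offz a haw ha
  have m3 := offz b hbw hb
  have m4 : psi J (pt J b + i • al) ≤ 1 / 74 := by
    rw [psi_pt]
    have habw : w ≤ |(a : ℝ) * w - b * w| := by
      rw [← sub_mul, abs_mul, abs_of_pos hw0]
      have : (1 : ℝ) ≤ |(a : ℝ) - b| := by
        have : (1 : ℤ) ≤ |(a : ℤ) - b| := Int.one_le_abs (by omega)
        exact_mod_cast this
      nlinarith
    have habw2 : |(a : ℝ) * w - b * w| ≤ 1 / 4 := by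
      rw [abs_le]; constructor <;> linarith
    have e : (i : ℝ) * dl J - b * w = (i * dl J - a * w) + (a * w - b * w) := by ring
    have u1 : |(i : ℝ) * dl J - b * w| ≤ dl J + 1 / 4 := by
      rw [e]; refine (abs_add_le _ _).trans ?_
      rw [abs_of_nonneg t1]; linarith
    have u2 : |(a : ℝ) * w - b * w| - dl J ≤ |(i : ℝ) * dl J - b * w| := by
      have := abs_sub_abs_le_abs_sub ((a : ℝ) * w - b * w) (-(i * dl J - a * w))
      rw [abs_neg, abs_of_nonneg t1, sub_neg_eq_add, add_comm (_ - _), ← e] at this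
      linarith
    have := off J (i * dl J - b * w) (by linarith) (by linarith)
    linarith
  have n2 := psi_nonneg J (pt J a)
  have n3 := psi_nonneg J (pt J b)
  have n4 := psi_nonneg J (pt J b + i • al)
  -- errors
  have hit : (i : ℝ) ≤ P (J + 1) := by
    unfold P; exact_mod_cast (tm_lt J a ha).le
  have hL := LL_ge (J + 1)
  have e0 : (i : ℝ) * tau (J + 1) ≤ 1 / 1000000 := by
    have ht := tau_pos (J + 1)
    have h1 : P (J + 1) ≤ LL (J + 1) := (P_le_A _).trans (A_le_LL _)
    have h2 := tau_le (J + 1)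
    have h3 : LL (J + 1) * 1000000 ≤ LL (J + 1) ^ 5 := by
      calc LL (J + 1) * 1000000 ≤ LL (J + 1) * LL (J + 1) := by gcongr
        _ = LL (J + 1) ^ 2 := by ring
        _ ≤ _ := pow_le_pow_right₀ (by linarith) (by norm_num)
    have h4 : tau (J + 1) * (LL (J + 1) * 1000000) ≤ tau (J + 1) * LL (J + 1) ^ 5 := by gcongr
    have h5 : i * tau (J + 1) ≤ LL (J + 1) * tau (J + 1) := by
      gcongr; linarith
    linarith
  have hpi := Real.pi_pos
  have hpi2 := Real.pi_le_four
  have e1 : 4 * Real.pi * i * tau (J + 1) ≤ 16 / 1000000 := by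
    calc _ = (4 * Real.pi) * (i * tau (J + 1)) := by ring
      _ ≤ (4 * 4) * (1 / 1000000) := by
        have ht := tau_pos (J + 1)
        gcongr
      _ ≤ _ := by norm_num
  have sa := S_split i (J + 1) (pt J a)
  have sb := S_split i (J + 1) (pt J b)
  rw [Finset.sum_range_succ] at sa sb
  have hx : ‖pt J a - pt J b‖ ≤ 1 / P J := by
    unfold pt
    rw [← AddCircle.coe_sub]
    refine (norm_coe_le _).trans ?_
    have e : -((a : ℝ) * w / P J) - -(b * w / P J) = (b * w - a * w) / P J := by ring
    rw [e, abs_div, abs_of_pos hP]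
    gcongr
    rw [abs_le]; constructor <;> linarith
  have hlo := sumD_lip i J (pt J a) (pt J b)
  have e2 : 2 * Real.pi * (∑ j ∈ Finset.range J, LL j) * ‖pt J a - pt J b‖ ≤ 8 / 100000 := by
    exact err_aux _ _ _ (Finset.sum_nonneg fun j _ => (LL_pos j).le) (sumL J) hP (norm_nonneg _) hx
  have sa1 := abs_le.1 (sa.trans e1)
  have sb1 := abs_le.1 (sb.trans e1)
  have hlo1 := abs_le.1 (hlo.trans e2)
  have dA : D i J (pt J a) = psi J (pt J a + i • al) - psi J (pt J a) := rfl
  have dB : D i J (pt J b) = psi J (pt J b + i • al) - psi J (pt J b) := rfl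
  rw [dA] at sa1
  rw [dB] at sb1
  have r1 : 1 / 4 ≤ S i (pt J a) - S i (pt J b) := by
    linarith [sa1.1, sa1.2, sb1.1, sb1.2, hlo1.1, hlo1.2]
  have r2 : S i (pt J a) - S i (pt J b) ≤ 3 / 4 := by
    linarith [sa1.1, sa1.2, sb1.1, sb1.2, hlo1.1, hlo1.2]
  rw [dist_iter]
  refine le_max_of_le_right ?_
  simp only [sub_self, zero_add]
  apply norm_coe_ge
  · rw [abs_of_nonneg (by linarith)]; exact r1
  · rw [abs_of_nonneg (by linarith)]; linarith

lemma card_lower (J : ℕ) (ε : ℝ) (hε : ε ≤ 1 / 8) (F : Finset Torus2)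
    (hF : ∀ y, ∃ x ∈ F, bowenDist T (pp (J + 1)) x y < ε) : A J / 32 ≤ F.card := by
  choose f hf hd using hF
  have hA := A_pos J
  have hA' := A_ge'' J
  set m := AA J / 16 with hm
  have hma : m * 16 ≤ AA J := Nat.div_mul_le_self _ _
  have hmb : ∀ a ≤ m, (a : ℝ) * (4 / A J) ≤ 1 / 4 := by
    intro a ha
    have : (a : ℝ) * 16 ≤ A J := by
      unfold A
      exact_mod_cast (Nat.mul_le_mul_right 16 ha).trans hma
    rw [mul_div_assoc', div_le_iff₀ hA]
    linarith
  have hcard : (Finset.Icc 1 m).card ≤ F.card := by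
    refine Finset.card_le_card_of_injOn (fun a => f (pt J a, 0)) (fun a _ => hf _) ?_
    intro a ha b hb hab
    simp only at hab
    by_contra hne
    obtain ⟨ha1, ha2⟩ := Finset.mem_Icc.1 ha
    obtain ⟨hb1, hb2⟩ := Finset.mem_Icc.1 hb
    have hs := sep J a b ha1 hb1 hne (hmb a ha2) (hmb b hb2)
    have hlt := tm_lt J a (hmb a ha2)
    have d1 := (le_bowen _ _ hlt (f (pt J a, 0)) (pt J a, 0)).trans_lt (hd (pt J a, 0))
    have d2 := (le_bowen _ _ hlt (f (pt J b, 0)) (pt J b, 0)).trans_lt (hd (pt J b, 0))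
    rw [← hab] at d2
    have := dist_triangle_left (T^[tm J a] (pt J a, 0)) (T^[tm J a] (pt J b, 0))
      (T^[tm J a] (f (pt J a, 0)))
    linarith
  rw [Nat.card_Icc, Nat.add_sub_cancel] at hcard
  have h1 : (m : ℝ) ≤ F.card := by exact_mod_cast hcard
  have h2 : A J < (m + 1) * 16 := by
    have : AA J < (m + 1) * 16 := by omega
    unfold A
    exact_mod_cast this
  linarith

lemma top_lower (ε : ℝ) (hε : 0 < ε) (hε8 : ε ≤ 1 / 8) (t : ℝ) (ht : t ≤ 1) :
    0 < atTop.limsup (fun n =>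
      (bowenCoverNum T n ε : ℝ≥0∞) / ENNReal.ofReal (intScale1 5 2 n t)) := by
  obtain ⟨C, hC, J1, hcov⟩ := cover ε hε
  have key : ENNReal.ofReal (1 / 32) ≤ atTop.limsup (fun n =>
      (bowenCoverNum T n ε : ℝ≥0∞) / ENNReal.ofReal (intScale1 5 2 n t)) := by
    refine le_limsup_of_frequently_le ?_ (by isBoundedDefault)
    rw [frequently_atTop]
    intro N
    set J := max N J1
    refine ⟨pp (J + 1), ?_, ?_⟩
    · have h1 := two_pow_le_pp (J + 1)
      have h2 : J + 1 + 32 < 2 ^ (J + 1 + 32) := Nat.lt_two_pow_self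
      omega
    · have hn : ((pp (J + 1) : ℕ) : ℝ) ≤ P (J + 2) / LL (J + 1) ^ 2 := by
        have h1 : P (J + 1) ≤ LL (J + 1) := (P_le_A _).trans (A_le_LL _)
        exact h1.trans (LL_le_thr (J + 1))
      obtain ⟨F, -, hF⟩ := hcov J (by omega) _ hn
      obtain ⟨F', hF'c, hF'⟩ := Nat.sInf_mem (s := {N : ℕ | ∃ F : Finset Torus2, F.card = N ∧
        ∀ y : Torus2, ∃ x ∈ F, bowenDist T (pp (J + 1)) x y < ε}) ⟨_, F, rfl, hF⟩
      have hlow := card_lower J ε hε8 F' hF'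
      rw [hF'c] at hlow
      change A J / 32 ≤ (bowenCoverNum T (pp (J + 1)) ε : ℝ) at hlow
      rw [scale_P]
      have hA := A_pos J
      have hAt : 0 < A J ^ t := Real.rpow_pos_of_pos hA t
      rw [← ENNReal.ofReal_natCast, ← ENNReal.ofReal_div_of_pos hAt]
      apply ENNReal.ofReal_le_ofReal
      rw [le_div_iff₀ hAt]
      have : A J ^ t ≤ A J := by
        calc A J ^ t ≤ A J ^ (1 : ℝ) :=
              Real.rpow_le_rpow_of_exponent_le (by linarith [A_ge'' J]) ht
          _ = A J := Real.rpow_one _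
      linarith
  exact lt_of_lt_of_le (ENNReal.ofReal_pos.2 (by norm_num)) key

lemma T_top_ent : HasUpperTopSlowEntropy T (intScale1 5 2) 1 := by
  unfold HasUpperTopSlowEntropy
  refine tendsto_const_nhds.congr' ?_
  have h8 : Set.Ioc (0 : ℝ) (1 / 8) ∈ 𝓝[>] (0 : ℝ) := Ioc_mem_nhdsGT (by norm_num)
  filter_upwards [h8] with ε hε
  have : {t : ℝ | 0 < t ∧ 0 < Filter.atTop.limsup fun n =>
      (bowenCoverNum T n ε : ℝ≥0∞) / ENNReal.ofReal (intScale1 5 2 n t)} = Set.Ioc 0 1 := by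
    ext t
    constructor
    · rintro ⟨h1, h2⟩
      refine ⟨h1, ?_⟩
      by_contra hcon
      rw [top_upper ε hε.1 t (by linarith)] at h2
      exact lt_irrefl _ h2
    · rintro ⟨h1, h2⟩
      exact ⟨h1, top_lower ε hε.1 hε.2 t h2⟩
  unfold topSlowEntFun
  rw [this, csSup_Ioc (by norm_num)]

end SE
end

/-- Failure of a variational principle for slow entropy at the
intermediate scale `a^{int1,5}`: there exist `q₁ ≥ 2` and a uniquely ergodic `C^∞`
diffeomorphism `T` of `𝕋²`, with the Haar–Lebesgue measure as its unique invariant Borel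
probability measure, whose upper measure-theoretic slow entropy at scale `a^{int1,5}`
(base `q₁`) equals `0` while its upper topological slow entropy at the same scale
equals `1`. -/
theorem stmt10 :
    ∃ q₁ : ℕ, 2 ≤ q₁ ∧ ∃ T : Torus2 → Torus2,
      IsCkTorusDiffeo ⊤ T ∧
      UniquelyErgodicWithVolume T ∧
      HasUpperMeasSlowEntropy (volume : Measure Torus2) T (intScale1 5 q₁) 0 ∧
      HasUpperTopSlowEntropy T (intScale1 5 q₁) 1 := by
  exact ⟨2, le_refl 2, SE.T, SE.T_diffeo, SE.T_ue, SE.T_meas_ent, SE.T_top_ent⟩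
end

section
/- For every ε ∈ (0, 1/4) there exists a C^∞ diffeomorphism φ_ε of ℝ² with the following properties: φ_ε maps the unit square [0,1]² onto itself and preserves two-dimensional Lebesgue measure; φ_ε equals the identity on the complement of [ε, 1−ε]² (in particular on [0,1]² \ [ε,1−ε]²); and φ_ε restricted to [2ε, 1−2ε]² coincides with the rotation by angle π/2 about the center (1/2, 1/2) of the square. -/
open MeasureTheory Set

open scoped ContDiff Topology

/-- A closed curve, invariant under the quarter turn, parametrised with unit areal velocity,
which traces the unit circle of the `ℓ^{2k}` norm. -/
structure QCurve (k : ℕ) where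
  a : ℝ → ℝ
  b : ℝ → ℝ
  T : ℝ
  ha : ContDiff ℝ ∞ a
  hb : ContDiff ℝ ∞ b
  hw : ∀ s, a s * deriv b s - b s * deriv a s = 1
  haT : ∀ s, a (s + T) = - b s
  hbT : ∀ s, b (s + T) = a s
  hN : ∀ s, a s ^ (2 * k) + b s ^ (2 * k) = 1
  surj : ∀ p : ℝ × ℝ, p ≠ 0 → ∃ q : ℝ × ℝ, 0 < q.1 ∧ (q.1 * a q.2, q.1 * b q.2) = p
  inj : ∀ s t, a s = a t → b s = b t → ∃ n : ℤ, t = s + n * (4 * T)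

lemma exists_qcurve (k : ℕ) (hk : k ≠ 0) : Nonempty (QCurve k) := by
  obtain ⟨v, hv⟩ : ∃ v : ℝ → ℝ, v = fun θ => Real.cos θ ^ (2 * k) + Real.sin θ ^ (2 * k) :=
    ⟨_, rfl⟩
  have hvpos : ∀ θ, 0 < v θ := by
    intro θ
    have h1 : 0 ≤ Real.cos θ ^ (2 * k) := (even_two_mul k).pow_nonneg _
    have h2 : 0 ≤ Real.sin θ ^ (2 * k) := (even_two_mul k).pow_nonneg _
    rcases eq_or_ne (Real.cos θ) 0 with h | h
    · have : Real.sin θ ≠ 0 := by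
        intro h'
        have := Real.sin_sq_add_cos_sq θ
        rw [h, h'] at this; norm_num at this
      have := (even_two_mul k).pow_pos this
      simp only [hv]; linarith
    · have := (even_two_mul k).pow_pos h
      simp only [hv]; linarith
  have hvs : ContDiff ℝ ∞ v := by
    rw [hv]
    exact (Real.contDiff_cos.pow _).add (Real.contDiff_sin.pow _)
  obtain ⟨r, hr⟩ : ∃ r : ℝ → ℝ, r = fun θ => v θ ^ (-(1 / (2 * k : ℝ))) := ⟨_, rfl⟩
  have hrpos : ∀ θ, 0 < r θ := fun θ => by
    rw [hr]; exact Real.rpow_pos_of_pos (hvpos θ) _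
  have hrs : ContDiff ℝ ∞ r := by
    rw [hr]
    exact hvs.rpow_const_of_ne (fun θ => (hvpos θ).ne')
  have hrv : ∀ θ, r θ ^ (2 * k) * v θ = 1 := by
    intro θ
    have : r θ ^ (2 * k) = (v θ)⁻¹ := by
      rw [hr]; simp only
      rw [← Real.rpow_natCast, ← Real.rpow_mul (hvpos θ).le, ← Real.rpow_neg_one]
      congr 1
      push_cast
      field_simp
    rw [this, inv_mul_cancel₀ (hvpos θ).ne']
  have hrper : ∀ θ, r (θ + Real.pi / 2) = r θ := by
    intro θ
    simp only [hr, hv, Real.cos_add_pi_div_two, Real.sin_add_pi_div_two, (even_two_mul k).neg_pow]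
    rw [add_comm]
  obtain ⟨w, hw⟩ : ∃ w : ℝ → ℝ, w = fun θ => r θ ^ 2 := ⟨_, rfl⟩
  have hwpos : ∀ θ, 0 < w θ := fun θ => by rw [hw]; exact pow_pos (hrpos θ) 2
  have hws : ContDiff ℝ ∞ w := by rw [hw]; exact hrs.pow 2
  have hwper : Function.Periodic w (Real.pi / 2) := by
    intro θ; simp only [hw, hrper]
  have hint : ∀ x y, IntervalIntegrable w volume x y := fun x y =>
    hws.continuous.intervalIntegrable _ _
  obtain ⟨S, hS⟩ : ∃ S : ℝ → ℝ, S = fun θ => ∫ t in (0:ℝ)..θ, w t := ⟨_, rfl⟩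
  obtain ⟨T, hT⟩ : ∃ T : ℝ, T = S (Real.pi / 2) := ⟨_, rfl⟩
  have hSd : ∀ θ, HasDerivAt S (w θ) θ := by
    intro θ
    rw [hS]
    exact hws.continuous.integral_hasStrictDerivAt 0 θ |>.hasDerivAt
  have hSs : ContDiff ℝ ∞ S := by
    rw [contDiff_infty_iff_deriv]
    refine ⟨fun θ => (hSd θ).differentiableAt, ?_⟩
    rw [show deriv S = w from funext fun θ => (hSd θ).deriv]
    exact hws
  have hSmono : StrictMono S := strictMono_of_deriv_pos fun θ => by
    rw [(hSd θ).deriv]; exact hwpos θ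
  have hST : ∀ θ, S (θ + Real.pi / 2) = S θ + T := by
    intro θ
    have h1 := hwper.intervalIntegral_add_eq θ 0
    have h2 := intervalIntegral.integral_add_adjacent_intervals (hint 0 θ) (hint θ (θ + Real.pi/2))
    simp only [hT, hS]
    rw [← h2, h1, zero_add]
  have hS0 : S 0 = 0 := by simp [hS]
  have hTpos : 0 < T := by
    rw [hT, ← hS0]; exact hSmono (by positivity)
  have hSn : ∀ θ, ∀ n : ℤ, S (θ + n * (Real.pi / 2)) = S θ + n * T := by
    intro θ n
    have hper : Function.Periodic (fun θ => S θ - T / (Real.pi / 2) * θ) (Real.pi / 2) := by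
      intro θ
      simp only [hST]
      have := Real.pi_ne_zero
      field_simp
      ring
    have h := hper.int_mul n θ
    have h3 : T / (Real.pi / 2) * (θ + n * (Real.pi / 2)) = T / (Real.pi / 2) * θ + n * T := by
      have := Real.pi_ne_zero
      field_simp
    rw [h3] at h
    linarith
  have hSsurj : Function.Surjective S := by
    intro y
    obtain ⟨n, hn⟩ := exists_nat_gt (|y| / T)
    have hn' : |y| < n * T := by rwa [div_lt_iff₀ hTpos] at hn
    have h1 := hSn 0 n
    have h2 := hSn 0 (-n)
    push_cast at h1 h2
    rw [hS0] at h1 h2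
    have := abs_lt.1 hn'
    have h3 : y ∈ Icc (S (0 + -(n:ℝ) * (Real.pi / 2))) (S (0 + (n:ℝ) * (Real.pi / 2))) := by
      rw [h1, h2]; constructor <;> linarith
    obtain ⟨θ, -, h⟩ := intermediate_value_Icc (by have := Real.pi_pos; nlinarith [n.cast_nonneg (α := ℝ)])
      (hSs.continuous.continuousOn) h3
    exact ⟨θ, h⟩
  let e : ℝ ≃ₜ ℝ := (StrictMono.orderIsoOfSurjective S hSmono hSsurj).toHomeomorph
  have he : ∀ θ, e θ = S θ := fun θ => rfl
  have hes : ContDiff ℝ ∞ e.symm :=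
    e.contDiff_symm_deriv (fun x => (hwpos x).ne') hSd hSs
  obtain ⟨Θ, hΘ⟩ : ∃ Θ : ℝ → ℝ, Θ = e.symm := ⟨_, rfl⟩
  have hΘs : ContDiff ℝ ∞ Θ := by rw [hΘ]; exact hes
  have hSΘ : ∀ s, S (Θ s) = s := fun s => by rw [hΘ, ← he]; simp
  have hΘS : ∀ θ, Θ (S θ) = θ := fun s => by rw [hΘ, ← he]; simp
  have hΘT : ∀ s, Θ (s + T) = Θ s + Real.pi / 2 := by
    intro s
    apply hSmono.injective
    rw [hST, hSΘ, hSΘ]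
  have hΘd : ∀ s, HasDerivAt Θ (w (Θ s))⁻¹ s := by
    intro s
    have h1 : HasDerivAt Θ (deriv Θ s) s :=
      (hΘs.differentiable (by simp) s).hasDerivAt
    have h2 := (hSd (Θ s)).comp s h1
    have h3 : (S ∘ Θ) = id := funext hSΘ
    rw [h3] at h2
    have h4 := h2.unique (hasDerivAt_id s)
    have : deriv Θ s = (w (Θ s))⁻¹ := eq_inv_of_mul_eq_one_right h4
    rwa [this] at h1
  refine ⟨{
    a := fun s => r (Θ s) * Real.cos (Θ s)
    b := fun s => r (Θ s) * Real.sin (Θ s)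
    T := T
    ha := (hrs.comp hΘs).mul (Real.contDiff_cos.comp hΘs)
    hb := (hrs.comp hΘs).mul (Real.contDiff_sin.comp hΘs)
    hw := ?_
    haT := ?_
    hbT := ?_
    hN := ?_
    surj := ?_
    inj := ?_ }⟩
  · intro s
    have hrd : HasDerivAt r (deriv r (Θ s)) (Θ s) :=
      (hrs.differentiable (by simp) _).hasDerivAt
    have h1 := (hrd.comp s (hΘd s)).mul ((Real.hasDerivAt_cos (Θ s)).comp s (hΘd s))
    have h2 := (hrd.comp s (hΘd s)).mul ((Real.hasDerivAt_sin (Θ s)).comp s (hΘd s))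
    have h1' : deriv (fun s => r (Θ s) * Real.cos (Θ s)) s = _ := h1.deriv
    have h2' : deriv (fun s => r (Θ s) * Real.sin (Θ s)) s = _ := h2.deriv
    rw [h1', h2']
    simp only [Function.comp]
    have hc := Real.sin_sq_add_cos_sq (Θ s)
    have hwr : r (Θ s) ^ 2 * (w (Θ s))⁻¹ = 1 := by
      have : w (Θ s) = r (Θ s) ^ 2 := by rw [hw]
      rw [← this, mul_inv_cancel₀ (hwpos _).ne']
    linear_combination (r (Θ s) ^ 2 * (w (Θ s))⁻¹) * hc + hwr
  · intro s
    simp only [hΘT, hrper, Real.cos_add_pi_div_two]; ring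
  · intro s
    simp only [hΘT, hrper, Real.sin_add_pi_div_two]
  · intro s
    have := hrv (Θ s)
    simp only [hv] at this
    simp only [mul_pow]
    linarith
  · intro p hp
    let z : ℂ := ⟨p.1, p.2⟩
    have hz : z ≠ 0 := by
      intro h
      apply hp
      have h1 := congrArg Complex.re h
      have h2 := congrArg Complex.im h
      exact Prod.ext h1 h2
    have hc : ‖z‖ * Real.cos z.arg = p.1 := Complex.norm_mul_cos_arg z
    have hs : ‖z‖ * Real.sin z.arg = p.2 := Complex.norm_mul_sin_arg z
    refine ⟨(‖z‖ / r z.arg, S z.arg), div_pos (norm_pos_iff.2 hz) (hrpos _), ?_⟩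
    have := (hrpos z.arg).ne'
    ext
    · simp only [hΘS]
      rw [← hc]; field_simp
    · simp only [hΘS]
      rw [← hs]; field_simp
  · intro s t h1 h2
    have hr2 : r (Θ s) = r (Θ t) := by
      have c1 := Real.sin_sq_add_cos_sq (Θ s)
      have c2 := Real.sin_sq_add_cos_sq (Θ t)
      have h3 : r (Θ s) ^ 2 = r (Θ t) ^ 2 := by
        have e1 := congrArg (· ^ 2) h1
        have e2 := congrArg (· ^ 2) h2
        simp only [mul_pow] at e1 e2
        linear_combination e1 + e2 - r (Θ s) ^ 2 * c1 + r (Θ t) ^ 2 * c2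
      exact (pow_left_inj₀ (hrpos _).le (hrpos _).le two_ne_zero).1 h3
    rw [hr2] at h1 h2
    have hc := mul_left_cancel₀ (hrpos _).ne' h1
    have hs := mul_left_cancel₀ (hrpos _).ne' h2
    obtain ⟨n, hn⟩ := Real.Angle.angle_eq_iff_two_pi_dvd_sub.1
      (Real.Angle.cos_sin_inj hc.symm hs.symm)
    refine ⟨n, ?_⟩
    have h5 : Θ t = Θ s + ((4 * n : ℤ) : ℝ) * (Real.pi / 2) := by
      push_cast; linarith
    have h6 := hSn (Θ s) (4 * n)
    rw [← h5, hSΘ, hSΘ] at h6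
    rw [h6]; push_cast; ring

namespace QCurve

variable {k : ℕ} (C : QCurve k)

/-- Generalised polar coordinates. -/
def P (q : ℝ × ℝ) : ℝ × ℝ := (q.1 * C.a q.2, q.1 * C.b q.2)

lemma P_norm (q : ℝ × ℝ) : (C.P q).1 ^ (2 * k) + (C.P q).2 ^ (2 * k) = q.1 ^ (2 * k) := by
  simp only [P, mul_pow]
  rw [← mul_add, C.hN, mul_one]

lemma P_ne_zero (hk : k ≠ 0) (q : ℝ × ℝ) (hq : 0 < q.1) : C.P q ≠ 0 := by
  intro h
  have h1 := C.P_norm q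
  rw [h] at h1
  have : 0 < q.1 ^ (2 * k) := by positivity
  rw [← h1] at this
  simp [hk] at this

lemma a_per : Function.Periodic C.a (4 * C.T) := by
  intro s
  rw [show s + 4 * C.T = s + C.T + C.T + C.T + C.T by ring, C.haT, C.hbT, C.haT, C.hbT, neg_neg]

lemma b_per : Function.Periodic C.b (4 * C.T) := by
  intro s
  rw [show s + 4 * C.T = s + C.T + C.T + C.T + C.T by ring, C.hbT, C.haT, C.hbT, C.haT, neg_neg]

lemma P_inj (hk : k ≠ 0) (q q' : ℝ × ℝ) (hq : 0 < q.1) (hq' : 0 < q'.1) (h : C.P q = C.P q') :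
    q.1 = q'.1 ∧ ∃ n : ℤ, q'.2 = q.2 + n * (4 * C.T) := by
  have h1 : q.1 = q'.1 := by
    have h2 := C.P_norm q
    rw [h, C.P_norm q'] at h2
    exact ((pow_left_inj₀ hq'.le hq.le (by positivity)).1 h2).symm
  refine ⟨h1, C.inj _ _ ?_ ?_⟩
  · have := congrArg Prod.fst h
    simp only [P, ← h1] at this
    exact mul_left_cancel₀ hq.ne' this
  · have := congrArg Prod.snd h
    simp only [P, ← h1] at this
    exact mul_left_cancel₀ hq.ne' this

open Classical in
/-- The twist map with twisting function `g`. -/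
noncomputable def twist (g : ℝ → ℝ) (p : ℝ × ℝ) : ℝ × ℝ :=
  if h : p = 0 then 0 else
    C.P ((C.surj p h).choose.1, (C.surj p h).choose.2 + g (C.surj p h).choose.1)

lemma twist_zero (g : ℝ → ℝ) : C.twist g 0 = 0 := by simp [twist]

lemma twist_P (hk : k ≠ 0) (g : ℝ → ℝ) (q : ℝ × ℝ) (hq : 0 < q.1) :
    C.twist g (C.P q) = C.P (q.1, q.2 + g q.1) := by
  have h := C.P_ne_zero hk q hq
  obtain ⟨h1, h2⟩ := (C.surj _ h).choose_spec
  simp only [twist, h, dite_false]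
  obtain ⟨e1, n, e2⟩ := C.P_inj hk _ _ hq h1 h2.symm
  generalize (C.surj _ h).choose = q' at *
  rw [← e1, e2]
  rw [show q.2 + n * (4 * C.T) + g q.1 = q.2 + g q.1 + n * (4 * C.T) by ring]
  simp only [P]
  rw [C.a_per.int_mul n, C.b_per.int_mul n]

lemma exists_P (p : ℝ × ℝ) (hp : p ≠ 0) : ∃ q : ℝ × ℝ, 0 < q.1 ∧ C.P q = p := C.surj p hp

lemma twist_comp (hk : k ≠ 0) (g h : ℝ → ℝ) (hgh : ∀ x, g x + h x = 0) (p : ℝ × ℝ) :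
    C.twist h (C.twist g p) = p := by
  by_cases hp : p = 0
  · rw [hp, twist_zero, twist_zero]
  · obtain ⟨q, hq, rfl⟩ := C.exists_P p hp
    rw [C.twist_P hk g q hq, C.twist_P hk h (q.1, q.2 + g q.1) hq]
    simp only [add_assoc, hgh, add_zero]

lemma contDiff_P : ContDiff ℝ ∞ C.P :=
  (contDiff_fst.mul (C.ha.comp contDiff_snd)).prodMk (contDiff_fst.mul (C.hb.comp contDiff_snd))

/-- The derivative of `P`. -/
noncomputable def P' (q : ℝ × ℝ) : ℝ × ℝ →L[ℝ] ℝ × ℝ :=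
  (Matrix.toLin (.finTwoProd ℝ) (.finTwoProd ℝ)
    !![C.a q.2, q.1 * deriv C.a q.2; C.b q.2, q.1 * deriv C.b q.2]).toContinuousLinearMap

lemma hasFDerivAt_P (q : ℝ × ℝ) : HasFDerivAt C.P (C.P' q) q := by
  have h1 : HasDerivAt C.a (deriv C.a q.2) q.2 :=
    (C.ha.differentiable (by simp) _).hasDerivAt
  have h2 : HasDerivAt C.b (deriv C.b q.2) q.2 :=
    (C.hb.differentiable (by simp) _).hasDerivAt
  unfold P'
  rw [Matrix.toLin_finTwoProd_toContinuousLinearMap]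
  convert!
    HasFDerivAt.prodMk (𝕜 := ℝ)
      (hasFDerivAt_fst.mul (h1.comp_hasFDerivAt q hasFDerivAt_snd))
      (hasFDerivAt_fst.mul (h2.comp_hasFDerivAt q hasFDerivAt_snd)) using
    2 <;>
  simp [smul_smul, add_comm]

lemma det_P' (q : ℝ × ℝ) : (C.P' q).det = q.1 := by
  unfold P'
  simp only [LinearMap.det_toContinuousLinearMap, LinearMap.det_toLin,
    Matrix.det_fin_two_of]
  linear_combination q.1 * C.hw q.2

lemma contDiffAt_twist (hk : k ≠ 0) (g : ℝ → ℝ) (hg : ContDiff ℝ ∞ g) (p : ℝ × ℝ) (hp : p ≠ 0) :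
    ContDiffAt ℝ ∞ (C.twist g) p := by
  obtain ⟨q, hq, rfl⟩ := C.exists_P p hp
  have hdet : (C.P' q).det ≠ 0 := by rw [C.det_P']; exact hq.ne'
  have hf : ContDiffAt ℝ ∞ C.P q := C.contDiff_P.contDiffAt
  have hf' : HasFDerivAt C.P
      ((C.P' q).toContinuousLinearEquivOfDetNeZero hdet : ℝ × ℝ →L[ℝ] ℝ × ℝ) q := by
    rw [ContinuousLinearMap.coe_toContinuousLinearEquivOfDetNeZero]
    exact C.hasFDerivAt_P q
  have hn : (∞ : WithTop ℕ∞) ≠ 0 := by simp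
  have hloc := hf.to_localInverse hf' hn
  have himg := hf.localInverse_apply_image hf' hn
  have hright : ∀ᶠ y in 𝓝 (C.P q), C.P (hf.localInverse hf' hn y) = y :=
    (hf.hasStrictFDerivAt' hf' hn).eventually_right_inverse
  generalize hf.localInverse hf' hn = G at *
  have hpos : ∀ᶠ y in 𝓝 (C.P q), 0 < (G y).1 := by
    have : ContinuousAt (fun y => (G y).1) (C.P q) := hloc.continuousAt.fst
    apply this.eventually_const_lt
    simp only [himg]; exact hq
  have hT : ContDiff ℝ ∞ (fun q : ℝ × ℝ => C.P (q.1, q.2 + g q.1)) :=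
    C.contDiff_P.comp (contDiff_fst.prodMk (contDiff_snd.add (hg.comp contDiff_fst)))
  have hcomp : ContDiffAt ℝ ∞ (fun y => C.P ((G y).1, (G y).2 + g (G y).1)) (C.P q) :=
    hT.contDiffAt.comp (C.P q) hloc
  refine hcomp.congr_of_eventuallyEq ?_
  filter_upwards [hright, hpos] with y h1 h2
  rw [← C.twist_P hk g _ h2, h1]

lemma det_twist (hk : k ≠ 0) (g : ℝ → ℝ) (hg : ContDiff ℝ ∞ g) (p : ℝ × ℝ) (hp : p ≠ 0) :
    (fderiv ℝ (C.twist g) p).det = 1 := by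
  have hd := (C.contDiffAt_twist hk g hg p hp).differentiableAt (by simp) |>.hasFDerivAt
  obtain ⟨q, hq, rfl⟩ := C.exists_P p hp
  have h1 := hd.comp q (C.hasFDerivAt_P q)
  have hgd : HasDerivAt g (deriv g q.1) q.1 := (hg.differentiable (by simp) _).hasDerivAt
  have hT : HasFDerivAt (fun q : ℝ × ℝ => (q.1, q.2 + g q.1))
      (Matrix.toLin (.finTwoProd ℝ) (.finTwoProd ℝ)
        !![1, 0; deriv g q.1, 1]).toContinuousLinearMap q := by
    rw [Matrix.toLin_finTwoProd_toContinuousLinearMap]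
    convert!
      HasFDerivAt.prodMk (𝕜 := ℝ) hasFDerivAt_fst
        (hasFDerivAt_snd.add (hgd.comp_hasFDerivAt q hasFDerivAt_fst)) using
      2 <;>
    simp [add_comm]
  have h2 := (C.hasFDerivAt_P (q.1, q.2 + g q.1)).comp q hT
  have heq : (C.P ∘ fun q : ℝ × ℝ => (q.1, q.2 + g q.1)) =ᶠ[𝓝 q] C.twist g ∘ C.P := by
    have : ∀ᶠ y in 𝓝 q, 0 < y.1 := continuousAt_fst.eventually_const_lt hq
    filter_upwards [this] with y hy
    exact (C.twist_P hk g y hy).symm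
  have h3 := (h1.congr_of_eventuallyEq heq).unique h2
  have h4 := congrArg ContinuousLinearMap.det h3
  have hmul : ∀ A B : ℝ × ℝ →L[ℝ] ℝ × ℝ, (A.comp B).det = A.det * B.det := by
    intro A B
    exact LinearMap.det_comp _ _
  rw [hmul, hmul, C.det_P', C.det_P'] at h4
  simp only [LinearMap.det_toContinuousLinearMap, LinearMap.det_toLin,
    Matrix.det_fin_two_of] at h4
  have h5 : ((fderiv ℝ (C.twist g) (C.P q)).det - 1) * q.1 = 0 := by linarith
  rcases mul_eq_zero.1 h5 with h | h
  · linarith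
  · exact absurd h hq.ne'

lemma measurePreserving_twist (hk : k ≠ 0) (g : ℝ → ℝ) (hg : ContDiff ℝ ∞ g)
    (hc : Continuous (C.twist g)) :
    MeasurePreserving (C.twist g) (volume : Measure (ℝ × ℝ)) volume := by
  refine ⟨hc.measurable, ?_⟩
  have hneg : ∀ x, g x + (fun x => - g x) x = 0 := fun x => by simp
  have hneg' : ∀ x, (fun x => - g x) x + g x = 0 := fun x => by simp
  have hinj : Function.Injective (C.twist g) :=
    Function.LeftInverse.injective (C.twist_comp hk g _ hneg)
  have hsurj : Function.Surjective (C.twist g) :=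
    Function.RightInverse.surjective (C.twist_comp hk _ g hneg')
  have himg : C.twist g '' {0}ᶜ = {0}ᶜ := by
    rw [image_compl_eq ⟨hinj, hsurj⟩, image_singleton, twist_zero]
  have hvol : (volume : Measure (ℝ × ℝ)).restrict {0}ᶜ = volume := by
    apply Measure.restrict_eq_self_of_ae_mem
    exact compl_mem_ae_iff.2 (by simp)
  have h := map_withDensity_abs_det_fderiv_eq_addHaar (volume : Measure (ℝ × ℝ))
    (s := {0}ᶜ) (f := C.twist g) (f' := fderiv ℝ (C.twist g))
    (measurableSet_singleton (0 : ℝ × ℝ)).compl.nullMeasurableSet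
    (fun p hp => ((C.contDiffAt_twist hk g hg p hp).differentiableAt
      (by simp)).hasFDerivAt.hasFDerivWithinAt) hinj.injOn
  rw [himg, hvol] at h
  have hden : (volume : Measure (ℝ × ℝ)).withDensity
      (fun x => ENNReal.ofReal |(fderiv ℝ (C.twist g) x).det|) = volume := by
    conv_rhs => rw [← withDensity_one (μ := (volume : Measure (ℝ × ℝ)))]
    apply withDensity_congr_ae
    have : ∀ᵐ p ∂(volume : Measure (ℝ × ℝ)), p ∈ ({0}ᶜ : Set (ℝ × ℝ)) := compl_mem_ae_iff.2 (by simp)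
    filter_upwards [this] with p hp
    rw [C.det_twist hk g hg p hp]
    simp
  rwa [hden] at h

/-- Where the twist is by a quarter period, it is the rotation. -/
lemma twist_rot (hk : k ≠ 0) (g : ℝ → ℝ) (p : ℝ × ℝ)
    (h : ∀ ρ, 0 < ρ → ρ ^ (2 * k) = p.1 ^ (2 * k) + p.2 ^ (2 * k) → g ρ = C.T) :
    C.twist g p = (- p.2, p.1) := by
  by_cases hp : p = 0
  · rw [hp, twist_zero]; ext <;> simp
  · obtain ⟨q, hq, rfl⟩ := C.exists_P p hp
    rw [C.twist_P hk g q hq, h q.1 hq (C.P_norm q).symm]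
    simp only [P, C.haT, C.hbT, mul_neg]

lemma twist_rot_neg (hk : k ≠ 0) (g : ℝ → ℝ) (p : ℝ × ℝ)
    (h : ∀ ρ, 0 < ρ → ρ ^ (2 * k) = p.1 ^ (2 * k) + p.2 ^ (2 * k) → g ρ = - C.T) :
    C.twist g p = (p.2, - p.1) := by
  by_cases hp : p = 0
  · rw [hp, twist_zero]; ext <;> simp
  · obtain ⟨q, hq, rfl⟩ := C.exists_P p hp
    rw [C.twist_P hk g q hq, h q.1 hq (C.P_norm q).symm]
    have h1 := C.haT (q.2 + -C.T)
    have h2 := C.hbT (q.2 + -C.T)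
    rw [neg_add_cancel_right] at h1 h2
    simp only [P, h1, h2, mul_neg, neg_neg]

lemma twist_id (hk : k ≠ 0) (g : ℝ → ℝ) (p : ℝ × ℝ)
    (h : ∀ ρ, 0 < ρ → ρ ^ (2 * k) = p.1 ^ (2 * k) + p.2 ^ (2 * k) → g ρ = 0) :
    C.twist g p = p := by
  by_cases hp : p = 0
  · rw [hp, twist_zero]
  · obtain ⟨q, hq, rfl⟩ := C.exists_P p hp
    rw [C.twist_P hk g q hq, h q.1 hq (C.P_norm q).symm, add_zero]

end QCurve

/-- The centred version. -/
lemma exists_centred (m M : ℝ) (hm : 0 < m) (hmM : m < M) :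
    ∃ φ φinv : ℝ × ℝ → ℝ × ℝ,
      ContDiff ℝ ∞ φ ∧ ContDiff ℝ ∞ φinv ∧
      Function.LeftInverse φinv φ ∧ Function.RightInverse φinv φ ∧
      MeasurePreserving φ (volume : Measure (ℝ × ℝ)) volume ∧
      (∀ p : ℝ × ℝ, M < |p.1| ∨ M < |p.2| → φ p = p) ∧
      (∀ p : ℝ × ℝ, |p.1| ≤ m → |p.2| ≤ m → φ p = (- p.2, p.1)) := by
  have hM : 0 < M := hm.trans hmM
  obtain ⟨n, hn⟩ := pow_unbounded_of_one_lt 2 ((one_lt_div hm).2 hmM)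
  obtain ⟨k, hk⟩ : ∃ k : ℕ, k = n + 1 := ⟨_, rfl⟩
  have hk0 : k ≠ 0 := by omega
  have hkey : 2 * m ^ (2 * k) < M ^ (2 * k) := by
    have h1 : (2 : ℝ) < (M / m) ^ (2 * k) :=
      hn.trans_le (pow_le_pow_right₀ ((one_lt_div hm).2 hmM).le (by omega))
    rw [div_pow, lt_div_iff₀ (by positivity)] at h1
    exact h1
  obtain ⟨C⟩ := exists_qcurve k hk0
  obtain ⟨g, hg⟩ : ∃ g : ℝ → ℝ, g = fun ρ => C.T * (1 - Real.smoothTransition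
    ((ρ ^ (2 * k) - 2 * m ^ (2 * k)) / (M ^ (2 * k) - 2 * m ^ (2 * k)))) := ⟨_, rfl⟩
  have hgs : ContDiff ℝ ∞ g := by
    rw [hg]
    refine contDiff_const.mul (contDiff_const.sub (Real.smoothTransition.contDiff.comp ?_))
    exact ((contDiff_id.pow _).sub contDiff_const).div_const _
  have hgin : ∀ ρ, ρ ^ (2 * k) ≤ 2 * m ^ (2 * k) → g ρ = C.T := by
    intro ρ h
    simp only [hg]
    rw [Real.smoothTransition.zero_of_nonpos, sub_zero, mul_one]
    exact div_nonpos_of_nonpos_of_nonneg (by linarith) (by linarith)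
  have hgout : ∀ ρ, M ^ (2 * k) ≤ ρ ^ (2 * k) → g ρ = 0 := by
    intro ρ h
    simp only [hg]
    rw [Real.smoothTransition.one_of_one_le, sub_self, mul_zero]
    rw [one_le_div (by linarith)]; linarith
  have hneg : ∀ x, g x + (fun x => - g x) x = 0 := fun x => by simp
  have hneg' : ∀ x, (fun x => - g x) x + g x = 0 := fun x => by simp
  have hnhds : ∀ᶠ p : ℝ × ℝ in 𝓝 0, p.1 ^ (2 * k) + p.2 ^ (2 * k) < 2 * m ^ (2 * k) := by
    have hcont : Continuous fun p : ℝ × ℝ => p.1 ^ (2 * k) + p.2 ^ (2 * k) := by fun_prop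
    apply hcont.continuousAt.eventually_lt_const
    simp [hk0]
    positivity
  have hs1 : ContDiff ℝ ∞ (C.twist g) := by
    rw [contDiff_iff_contDiffAt]
    intro p
    by_cases hp : p = 0
    · have h : ContDiffAt ℝ ∞ (fun p : ℝ × ℝ => (- p.2, p.1)) p :=
        (contDiff_snd.neg.prodMk contDiff_fst).contDiffAt
      refine h.congr_of_eventuallyEq ?_
      rw [hp]
      filter_upwards [hnhds] with p hp
      exact C.twist_rot hk0 g p fun ρ _ h => hgin ρ (by linarith)
    · exact C.contDiffAt_twist hk0 g hgs p hp
  have hs2 : ContDiff ℝ ∞ (C.twist fun x => - g x) := by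
    rw [contDiff_iff_contDiffAt]
    intro p
    by_cases hp : p = 0
    · have h : ContDiffAt ℝ ∞ (fun p : ℝ × ℝ => (p.2, - p.1)) p :=
        (contDiff_snd.prodMk contDiff_fst.neg).contDiffAt
      refine h.congr_of_eventuallyEq ?_
      rw [hp]
      filter_upwards [hnhds] with p hp
      exact C.twist_rot_neg hk0 _ p fun ρ _ h => by rw [hgin ρ (by linarith)]
    · exact C.contDiffAt_twist hk0 _ hgs.neg p hp
  refine ⟨C.twist g, C.twist fun x => - g x, hs1, hs2, C.twist_comp hk0 _ _ hneg,
    C.twist_comp hk0 _ _ hneg', C.measurePreserving_twist hk0 g hgs hs1.continuous, ?_, ?_⟩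
  · intro p hp
    refine C.twist_id hk0 g p fun ρ _ h => hgout ρ ?_
    rw [h]
    have h1 : 0 ≤ p.1 ^ (2 * k) := (even_two_mul k).pow_nonneg _
    have h2 : 0 ≤ p.2 ^ (2 * k) := (even_two_mul k).pow_nonneg _
    rcases hp with hp | hp
    · have := pow_le_pow_left₀ hM.le hp.le (2 * k)
      rw [(even_two_mul k).pow_abs] at this
      linarith
    · have := pow_le_pow_left₀ hM.le hp.le (2 * k)
      rw [(even_two_mul k).pow_abs] at this
      linarith
  · intro p h1 h2
    refine C.twist_rot hk0 g p fun ρ _ h => hgin ρ ?_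
    rw [h]
    have h3 := pow_le_pow_left₀ (abs_nonneg _) h1 (2 * k)
    have h4 := pow_le_pow_left₀ (abs_nonneg _) h2 (2 * k)
    rw [(even_two_mul k).pow_abs] at h3 h4
    linarith

/-- quasi-rotation: for every `ε ∈ (0, 1/4)` there is a `C^∞`
diffeomorphism `φ_ε` of `ℝ²` which maps the unit square `[0,1]²` onto itself, preserves
two-dimensional Lebesgue measure, equals the identity outside `[ε, 1-ε]²`, and coincides
on `[2ε, 1-2ε]²` with the rotation by `π/2` about the center `(1/2, 1/2)` of the square,
i.e. with `(x,y) ↦ (1-y, x)`. -/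
theorem stmt19 (ε : ℝ) (hε0 : 0 < ε) (hε : ε < 1 / 4) :
    ∃ φ φinv : ℝ × ℝ → ℝ × ℝ,
      ContDiff ℝ (⊤ : ℕ∞) φ ∧ ContDiff ℝ (⊤ : ℕ∞) φinv ∧
      Function.LeftInverse φinv φ ∧ Function.RightInverse φinv φ ∧
      φ '' (Set.Icc (0 : ℝ) 1 ×ˢ Set.Icc (0 : ℝ) 1) = Set.Icc (0 : ℝ) 1 ×ˢ Set.Icc (0 : ℝ) 1 ∧
      MeasurePreserving φ (volume : Measure (ℝ × ℝ)) volume ∧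
      (∀ p : ℝ × ℝ, p ∉ Set.Icc ε (1 - ε) ×ˢ Set.Icc ε (1 - ε) → φ p = p) ∧
      (∀ p ∈ Set.Icc (2 * ε) (1 - 2 * ε) ×ˢ Set.Icc (2 * ε) (1 - 2 * ε),
        φ p = (1 - p.2, p.1)) := by
  obtain ⟨f, f', hf, hf', hl, hr, hmp, hid, hrot⟩ :=
    exists_centred (1 / 2 - 2 * ε) (1 / 2 - ε) (by linarith) (by linarith)
  let c : ℝ × ℝ := (1 / 2, 1 / 2)
  have hl' : Function.LeftInverse (fun p => f' (p - c) + c) (fun p => f (p - c) + c) := by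
    intro p; simp [hl (p - c)]
  have hr' : Function.RightInverse (fun p => f' (p - c) + c) (fun p => f (p - c) + c) := by
    intro p; simp [hr (p - c)]
  have hid' : ∀ p : ℝ × ℝ, p ∉ Set.Icc ε (1 - ε) ×ˢ Set.Icc ε (1 - ε) → f (p - c) + c = p := by
    intro p hp
    rw [hid, sub_add_cancel]
    by_contra! h
    apply hp
    have h1 := abs_le.1 h.1
    have h2 := abs_le.1 h.2
    simp only [c, Prod.fst_sub, Prod.snd_sub] at h1 h2
    exact ⟨⟨by linarith, by linarith⟩, ⟨by linarith, by linarith⟩⟩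
  have hsub : Set.Icc ε (1 - ε) ×ˢ Set.Icc ε (1 - ε) ⊆
      Set.Icc (0 : ℝ) 1 ×ˢ Set.Icc (0 : ℝ) 1 :=
    Set.prod_mono (Set.Icc_subset_Icc hε0.le (by linarith))
      (Set.Icc_subset_Icc hε0.le (by linarith))
  refine ⟨fun p => f (p - c) + c, fun p => f' (p - c) + c,
    (hf.comp (contDiff_id.sub contDiff_const)).add contDiff_const,
    (hf'.comp (contDiff_id.sub contDiff_const)).add contDiff_const, hl', hr', ?_, ?_, hid', ?_⟩
  · apply Set.Subset.antisymm
    · rintro _ ⟨p, hp, rfl⟩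
      by_contra h
      have h1 := hid' _ (fun h' => h (hsub h'))
      have h2 := hl'.injective h1
      exact h (by rw [← h2] at hp; exact hp)
    · intro p hp
      refine ⟨f' (p - c) + c, ?_, hr' p⟩
      by_contra h
      have h1 := hid' _ (fun h' => h (hsub h'))
      have h2 := hr' p
      simp only at h2
      rw [h1] at h2
      rw [h2] at h
      exact h hp
  · exact (measurePreserving_add_right volume c).comp
      (hmp.comp (measurePreserving_sub_right volume c))
  · rintro p ⟨⟨h1, h2⟩, h3, h4⟩
    have := hrot (p - c) (abs_le.2 ⟨by simp [c]; linarith, by simp [c]; linarith⟩)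
      (abs_le.2 ⟨by simp [c]; linarith, by simp [c]; linarith⟩)
    simp only [this]
    ext
    · simp [c]; ring
    · simp [c]
end
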